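/- Consider the Fuchsian equation t·∂_t²v + 2·∂_t v = α(t,x) + t·P(t,x,∂_x)∂_t v + Q(t,x,∂_x)v + t·β(t,x)·(∂_t v)² + (R(t,x,∂_x)v)·t·∂_t v + S(t,x;∇v) near {0}×V ⊂ ℝ_t×ℝⁿ_x, where V ⊂ ℝⁿ is open, α and β are real-analytic functions, P, Q, R are linear partial differential operators in x (commuting with multiplication by t) of orders 1, 2 and 1 respectively with real-analytic coefficients, and S(t,x;ξ) is a quadratic form in ξ ∈ ℝⁿ with real-analytic coefficients in (t,x). Then for every real-analytic function v₀ on V, this equation has a unique real-analytic solution v(t,x) in a neighborhood of {0}×V satisfying v(0,x) = v₀(x). -/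

import Mathlib

open Real Filter

/-- partial derivative in `t` of a function `v(t,x)` -/
noncomputable def ptd {n : ℕ} (v : ℝ → (Fin n → ℝ) → ℝ) (t : ℝ) (x : Fin n → ℝ) : ℝ :=
  deriv (fun s => v s x) t

/-- partial derivative in `x i` of a function `v(t,x)` -/
noncomputable def pxd {n : ℕ} (i : Fin n) (v : ℝ → (Fin n → ℝ) → ℝ) (t : ℝ)
    (x : Fin n → ℝ) : ℝ :=
  deriv (fun y => v t (Function.update x i y)) (x i)

/-- `v` satisfies the Fuchsian equation of weight 1
`t v_tt + 2 v_t = α + t P(∂_x) v_t + Q(∂_x) v + t β (v_t)² + (R(∂_x)v)·t v_t + S(t,x;∇v)`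
at every point of `S`, where the first-order operator `P` has coefficients `p0, p`, the
second-order operator `Q` has coefficients `q0, q1, q2`, the first-order operator `R` has
coefficients `r0, r`, and the quadratic form `S` has coefficients `s`. -/
def SolvesFuchs {n : ℕ} (α β p0 r0 q0 : ℝ → (Fin n → ℝ) → ℝ)
    (p r q1 : Fin n → ℝ → (Fin n → ℝ) → ℝ) (q2 s : Fin n → Fin n → ℝ → (Fin n → ℝ) → ℝ)
    (v : ℝ → (Fin n → ℝ) → ℝ) (S : Set (ℝ × (Fin n → ℝ))) : Prop :=
  ∀ t x, (t, x) ∈ S →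
    t * ptd (ptd v) t x + 2 * ptd v t x =
      α t x
      + t * (p0 t x * ptd v t x + ∑ i, p i t x * pxd i (ptd v) t x)
      + (q0 t x * v t x + ∑ i, q1 i t x * pxd i v t x
          + ∑ i, ∑ j, q2 i j t x * pxd i (pxd j v) t x)
      + t * β t x * ptd v t x ^ 2
      + (r0 t x * v t x + ∑ i, r i t x * pxd i v t x) * (t * ptd v t x)
      + ∑ i, ∑ j, s i j t x * pxd i v t x * pxd j v t x

namespace Fuchs
open MvPowerSeries Finsupp
open scoped NNReal ENNReal

section norm
variable {σ : Type*}

/-- weighted `ℓ¹` norm of a formal power series -/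
noncomputable def Nw (w : (σ →₀ ℕ) → ℝ≥0) (F : MvPowerSeries σ ℝ) : ℝ≥0∞ :=
  ∑' m, ((‖coeff m F‖₊ * w m : ℝ≥0) : ℝ≥0∞)

lemma Nw_add (w : (σ →₀ ℕ) → ℝ≥0) (F G : MvPowerSeries σ ℝ) :
    Nw w (F + G) ≤ Nw w F + Nw w G := by
  unfold Nw
  rw [← ENNReal.tsum_add]
  refine ENNReal.tsum_le_tsum fun m => ?_
  rw [← ENNReal.coe_add, ← add_mul]
  refine ENNReal.coe_le_coe.2 ?_
  gcongr
  rw [map_add]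
  exact nnnorm_add_le _ _

lemma Nw_zero (w : (σ →₀ ℕ) → ℝ≥0) : Nw w (0 : MvPowerSeries σ ℝ) = 0 := by
  simp [Nw]

lemma Nw_sum {κ : Type*} (w : (σ →₀ ℕ) → ℝ≥0) (s : Finset κ) (F : κ → MvPowerSeries σ ℝ) :
    Nw w (∑ i ∈ s, F i) ≤ ∑ i ∈ s, Nw w (F i) := by
  classical
  induction s using Finset.induction_on with
  | empty => simp [Nw_zero]
  | insert a s ha ih =>
    rw [Finset.sum_insert ha, Finset.sum_insert ha]
    exact (Nw_add _ _ _).trans (add_le_add le_rfl ih)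

lemma Nw_mul (w : (σ →₀ ℕ) → ℝ≥0) (hw : ∀ a b, w (a + b) ≤ w a * w b)
    (F G : MvPowerSeries σ ℝ) : Nw w (F * G) ≤ Nw w F * Nw w G := by
  classical
  unfold Nw
  have h2 : (∑' m, ((‖coeff m F‖₊ * w m : ℝ≥0) : ℝ≥0∞)) * (∑' m, ((‖coeff m G‖₊ * w m : ℝ≥0) : ℝ≥0∞))
      = ∑' m, ∑ kl ∈ Finset.HasAntidiagonal.antidiagonal m, ((‖coeff kl.1 F‖₊ * w kl.1 : ℝ≥0) : ℝ≥0∞) *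
        ((‖coeff kl.2 G‖₊ * w kl.2 : ℝ≥0) : ℝ≥0∞) := by
    have h3 : ∀ m : σ →₀ ℕ, ∑ kl ∈ Finset.HasAntidiagonal.antidiagonal m,
        ((‖coeff kl.1 F‖₊ * w kl.1 : ℝ≥0) : ℝ≥0∞) * ((‖coeff kl.2 G‖₊ * w kl.2 : ℝ≥0) : ℝ≥0∞) =
        ∑' p : Finset.HasAntidiagonal.antidiagonal m,
        ((‖coeff p.1.1 F‖₊ * w p.1.1 : ℝ≥0) : ℝ≥0∞) * ((‖coeff p.1.2 G‖₊ * w p.1.2 : ℝ≥0) : ℝ≥0∞) :=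
      fun m => (Finset.tsum_subtype _ (fun kl : (σ →₀ ℕ) × (σ →₀ ℕ) => ((‖coeff kl.1 F‖₊ * w kl.1 : ℝ≥0) : ℝ≥0∞) *
        ((‖coeff kl.2 G‖₊ * w kl.2 : ℝ≥0) : ℝ≥0∞))).symm
    rw [tsum_congr h3]
    rw [← ENNReal.tsum_sigma (β := fun m : σ →₀ ℕ => Finset.HasAntidiagonal.antidiagonal m)
      (fun (_ : σ →₀ ℕ) p => ((‖coeff p.1.1 F‖₊ * w p.1.1 : ℝ≥0) : ℝ≥0∞) *
        ((‖coeff p.1.2 G‖₊ * w p.1.2 : ℝ≥0) : ℝ≥0∞))]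
    rw [← ENNReal.tsum_mul_right]
    simp_rw [← ENNReal.tsum_mul_left]
    rw [← ENNReal.tsum_prod (f := fun a b => ((‖coeff a F‖₊ * w a : ℝ≥0) : ℝ≥0∞) *
        ((‖coeff b G‖₊ * w b : ℝ≥0) : ℝ≥0∞))]
    exact (Finset.HasAntidiagonal.sigmaAntidiagonalEquivProd.tsum_eq (fun p : (σ →₀ ℕ) × (σ →₀ ℕ) => ((‖coeff p.1 F‖₊ * w p.1 : ℝ≥0) : ℝ≥0∞) *
        ((‖coeff p.2 G‖₊ * w p.2 : ℝ≥0) : ℝ≥0∞))).symm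
  rw [h2]
  refine ENNReal.tsum_le_tsum fun m => ?_
  have : ‖coeff m (F * G)‖₊ * w m ≤ ∑ kl ∈ Finset.HasAntidiagonal.antidiagonal m,
      (‖coeff kl.1 F‖₊ * w kl.1) * (‖coeff kl.2 G‖₊ * w kl.2) := by
    rw [coeff_mul]
    calc _ ≤ (∑ kl ∈ Finset.HasAntidiagonal.antidiagonal m, ‖coeff kl.1 F * coeff kl.2 G‖₊) * w m := by
            gcongr; exact nnnorm_sum_le _ _
      _ ≤ _ := by
        rw [Finset.sum_mul]
        refine Finset.sum_le_sum fun kl hkl => ?_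
        rw [Finset.HasAntidiagonal.mem_antidiagonal] at hkl
        rw [nnnorm_mul, ← hkl]
        calc _ ≤ ‖coeff kl.1 F‖₊ * ‖coeff kl.2 G‖₊ * (w kl.1 * w kl.2) := by
              gcongr; exact hw _ _
          _ = _ := by ring
  calc _ ≤ ((∑ kl ∈ Finset.HasAntidiagonal.antidiagonal m,
      (‖coeff kl.1 F‖₊ * w kl.1) * (‖coeff kl.2 G‖₊ * w kl.2) : ℝ≥0) : ℝ≥0∞) :=
        ENNReal.coe_le_coe.2 this
    _ = _ := by push_cast; rfl

/-- bound for a shift operator -/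
lemma Nw_op (w : (σ →₀ ℕ) → ℝ≥0) (F G : MvPowerSeries σ ℝ) (a b : σ →₀ ℕ)
    (c : (σ →₀ ℕ) → ℝ≥0) (C : ℝ≥0)
    (h0 : ∀ m, coeff m G ≠ 0 → a ≤ m)
    (h1 : ∀ m, coeff (m + a) G = c m * coeff (m + b) F)
    (h2 : ∀ m, c m * w (m + a) ≤ C * w (m + b)) :
    Nw w G ≤ C * Nw w F := by
  unfold Nw
  have hinj : Function.Injective (fun m : σ →₀ ℕ => m + a) := fun x y h => by simpa using h
  rw [← hinj.tsum_eq (f := fun m => ((‖coeff m G‖₊ * w m : ℝ≥0) : ℝ≥0∞))]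
  · have hinjb : Function.Injective (fun m : σ →₀ ℕ => m + b) := fun x y h => by simpa using h
    calc _ ≤ ∑' m, (C : ℝ≥0∞) * ((‖coeff (m + b) F‖₊ * w (m + b) : ℝ≥0) : ℝ≥0∞) := by
          refine ENNReal.tsum_le_tsum fun m => ?_
          rw [← ENNReal.coe_mul]
          refine ENNReal.coe_le_coe.2 ?_
          simp only [h1, nnnorm_mul, NNReal.nnnorm_eq]
          calc _ = ‖coeff (m + b) F‖₊ * (c m * w (m + a)) := by ring
            _ ≤ ‖coeff (m + b) F‖₊ * (C * w (m + b)) := mul_le_mul_right (h2 m) _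
            _ = _ := by ring
      _ ≤ _ := by
        rw [ENNReal.tsum_mul_left]
        exact mul_le_mul_right (ENNReal.tsum_comp_le_tsum_of_injective hinjb
          (fun m => ((‖coeff m F‖₊ * w m : ℝ≥0) : ℝ≥0∞))) _
  · intro m hm
    have : coeff m G ≠ 0 := by
      intro h
      simp [h] at hm
    exact ⟨m - a, by simpa using tsub_add_cancel_of_le (h0 m this)⟩

lemma Nw_mono (w w' : (σ →₀ ℕ) → ℝ≥0) (h : ∀ m, w m ≤ w' m) (F : MvPowerSeries σ ℝ) :
    Nw w F ≤ Nw w' F :=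
  ENNReal.tsum_le_tsum fun m => ENNReal.coe_le_coe.2 (by gcongr; exact h m)

end norm

section weight
variable {n : ℕ}

/-- degree in the `x` variables -/
def xd (m : Option (Fin n) →₀ ℕ) : ℕ := ∑ i : Fin n, m (some i)

lemma xd_add (a b : Option (Fin n) →₀ ℕ) : xd (a + b) = xd a + xd b := by
  simp [xd, Finset.sum_add_distrib]

lemma xd_none (k : ℕ) : xd (single none k : Option (Fin n) →₀ ℕ) = 0 := by
  simp [xd]

lemma xd_some (i : Fin n) (k : ℕ) : xd (single (some i) k : Option (Fin n) →₀ ℕ) = k := by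
  simp [xd, Finsupp.single_apply]

lemma le_xd (m : Option (Fin n) →₀ ℕ) (i : Fin n) : m (some i) ≤ xd m :=
  Finset.single_le_sum (f := fun i : Fin n => m (some i)) (fun _ _ => Nat.zero_le _)
    (Finset.mem_univ i)

/-- basic weight -/
noncomputable def wt (δ R : ℝ≥0) (k l : ℕ) : ℝ≥0 := δ ^ k * R ^ l / (Nat.choose (2 * k + l) l : ℝ≥0)

noncomputable def W (δ R : ℝ≥0) (m : Option (Fin n) →₀ ℕ) : ℝ≥0 := wt δ R (m none) (xd m)

lemma choose_pos' (k l : ℕ) : (0 : ℝ≥0) < (Nat.choose (2 * k + l) l : ℝ≥0) := by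
  exact_mod_cast Nat.choose_pos (by omega)

lemma W_submul (δ R : ℝ≥0) (a b : Option (Fin n) →₀ ℕ) :
    W δ R (a + b) ≤ W δ R a * W δ R b := by
  unfold W wt
  rw [xd_add, Finsupp.add_apply, div_mul_div_comm]
  have h : Nat.choose (2 * a none + xd a) (xd a) * Nat.choose (2 * b none + xd b) (xd b) ≤
      Nat.choose (2 * (a none + b none) + (xd a + xd b)) (xd a + xd b) := by
    have e : 2 * (a none + b none) + (xd a + xd b) = (2 * a none + xd a) + (2 * b none + xd b) := by
      ring
    rw [e, Nat.add_choose_eq (2 * a none + xd a) (2 * b none + xd b)]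
    exact Finset.single_le_sum (f := fun ij : ℕ × ℕ => Nat.choose (2 * a none + xd a) ij.1 *
      Nat.choose (2 * b none + xd b) ij.2) (fun _ _ => Nat.zero_le _)
      (a := (xd a, xd b)) (Finset.HasAntidiagonal.mem_antidiagonal.2 rfl)
  have h' : (Nat.choose (2 * a none + xd a) (xd a) : ℝ≥0) * Nat.choose (2 * b none + xd b) (xd b) ≤
      Nat.choose (2 * (a none + b none) + (xd a + xd b)) (xd a + xd b) := by exact_mod_cast h
  calc _ ≤ δ ^ (a none + b none) * R ^ (xd a + xd b) / ((Nat.choose (2 * a none + xd a) (xd a) : ℝ≥0) * Nat.choose (2 * b none + xd b) (xd b)) := by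
        gcongr
        exact mul_pos (choose_pos' _ _) (choose_pos' _ _)
    _ = _ := by congr 1; ring

lemma wt_t (δ R : ℝ≥0) (k l : ℕ) : wt δ R (k + 1) l ≤ δ * wt δ R k l := by
  unfold wt
  rw [← mul_div_assoc]
  have h : Nat.choose (2 * k + l) l ≤ Nat.choose (2 * (k + 1) + l) l :=
    Nat.choose_le_choose _ (by omega)
  have h' : (Nat.choose (2 * k + l) l : ℝ≥0) ≤ Nat.choose (2 * (k + 1) + l) l := by exact_mod_cast h
  calc _ ≤ δ ^ (k + 1) * R ^ l / (Nat.choose (2 * k + l) l : ℝ≥0) := by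
        gcongr
        exact choose_pos' _ _
    _ = _ := by congr 1; ring

/-- one `x`-derivative versus one power of `t` -/
lemma wt_x (δ R : ℝ≥0) (hR : 0 < R) (k l : ℕ) :
    (l + 1) * wt δ R (k + 1) l ≤ (2 * (k + 1)) * (δ / R) * wt δ R k (l + 1) := by
  unfold wt
  have h : (l + 1) * Nat.choose (2 * k + (l + 1)) (l + 1) ≤ (2 * (k + 1)) * Nat.choose (2 * (k + 1) + l) l := by
    have h1 : Nat.choose (2 * k + (l + 1)) (l + 1) ≤ Nat.choose (2 * (k + 1) + l) (l + 1) :=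
      Nat.choose_le_choose _ (by omega)
    have h2 := Nat.choose_succ_right_eq (2 * (k + 1) + l) l
    have h3 : 2 * (k + 1) + l - l = 2 * (k + 1) := by omega
    rw [h3] at h2
    nlinarith
  have h' : ((l : ℝ≥0) + 1) * (Nat.choose (2 * k + (l + 1)) (l + 1) : ℝ≥0) ≤
      (2 * (k + 1)) * (Nat.choose (2 * (k + 1) + l) l : ℝ≥0) := by exact_mod_cast h
  have e : (2 * ((k : ℝ≥0) + 1)) * (δ / R) * (δ ^ k * R ^ (l + 1) / (Nat.choose (2 * k + (l + 1)) (l + 1) : ℝ≥0))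
      = (2 * (k + 1)) * (δ ^ (k + 1) * R ^ l) / (Nat.choose (2 * k + (l + 1)) (l + 1) : ℝ≥0) := by
    field_simp
    congr 1
    ring
  rw [e, ← mul_div_assoc, div_le_div_iff₀ (choose_pos' _ _) (choose_pos' _ _)]
  calc _ = δ ^ (k + 1) * R ^ l * (((l : ℝ≥0) + 1) * (Nat.choose (2 * k + (l + 1)) (l + 1) : ℝ≥0)) := by ring
    _ ≤ δ ^ (k + 1) * R ^ l * ((2 * (k + 1)) * (Nat.choose (2 * (k + 1) + l) l : ℝ≥0)) := by gcongr
    _ = _ := by ring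

/-- two `x`-derivatives versus one power of `t` -/
lemma wt_xx (δ R : ℝ≥0) (hR : 0 < R) (k l : ℕ) :
    (l + 1) * (l + 2) * wt δ R (k + 1) l ≤ 4 * ((k + 1) * (k + 2)) * (δ / R ^ 2) * wt δ R k (l + 2) := by
  unfold wt
  have h : (l + 1) * (l + 2) * Nat.choose (2 * k + (l + 2)) (l + 2) ≤
      (4 * ((k + 1) * (k + 2))) * Nat.choose (2 * (k + 1) + l) l := by
    have e : 2 * k + (l + 2) = 2 * (k + 1) + l := by omega
    rw [e]
    have h2 := Nat.choose_succ_right_eq (2 * (k + 1) + l) l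
    have h4 := Nat.choose_succ_right_eq (2 * (k + 1) + l) (l + 1)
    have h3 : 2 * (k + 1) + l - l = 2 * (k + 1) := by omega
    have h5 : 2 * (k + 1) + l - (l + 1) = 2 * k + 1 := by omega
    rw [h3] at h2
    rw [h5] at h4
    calc _ = (l + 1) * (Nat.choose (2 * (k + 1) + l) (l + 2) * (l + 2)) := by ring
      _ = (l + 1) * (Nat.choose (2 * (k + 1) + l) (l + 1) * (2 * k + 1)) := by rw [← h4]
      _ = (2 * k + 1) * (Nat.choose (2 * (k + 1) + l) (l + 1) * (l + 1)) := by ring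
      _ = (2 * k + 1) * (2 * (k + 1)) * Nat.choose (2 * (k + 1) + l) l := by rw [h2]; ring
      _ ≤ _ := Nat.mul_le_mul_right _ (by nlinarith)
  have h' : ((l : ℝ≥0) + 1) * (l + 2) * (Nat.choose (2 * k + (l + 2)) (l + 2) : ℝ≥0) ≤
      (4 * ((k + 1) * (k + 2))) * (Nat.choose (2 * (k + 1) + l) l : ℝ≥0) := by exact_mod_cast h
  have e : 4 * (((k : ℝ≥0) + 1) * (k + 2)) * (δ / R ^ 2) * (δ ^ k * R ^ (l + 2) / (Nat.choose (2 * k + (l + 2)) (l + 2) : ℝ≥0))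
      = (4 * ((k + 1) * (k + 2))) * (δ ^ (k + 1) * R ^ l) / (Nat.choose (2 * k + (l + 2)) (l + 2) : ℝ≥0) := by
    field_simp
    congr 1
    ring
  rw [e, ← mul_div_assoc, div_le_div_iff₀ (choose_pos' _ _) (choose_pos' _ _)]
  calc _ = δ ^ (k + 1) * R ^ l * (((l : ℝ≥0) + 1) * (l + 2) * (Nat.choose (2 * k + (l + 2)) (l + 2) : ℝ≥0)) := by ring
    _ ≤ δ ^ (k + 1) * R ^ l * ((4 * ((k + 1) * (k + 2))) * (Nat.choose (2 * (k + 1) + l) l : ℝ≥0)) := by gcongr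
    _ = _ := by ring

/-- geometric weight -/
noncomputable def geo (r : ℝ≥0) (m : Option (Fin n) →₀ ℕ) : ℝ≥0 := r ^ (m none + xd m)

lemma geo_add (r : ℝ≥0) (a b : Option (Fin n) →₀ ℕ) : geo r (a + b) = geo r a * geo r b := by
  simp only [geo, xd_add, Finsupp.add_apply]; rw [← pow_add]; congr 1; ring

lemma W_le_geo {δ R r : ℝ≥0} (hδ : δ ≤ r) (hR : R ≤ r) (m : Option (Fin n) →₀ ℕ) :
    W δ R m ≤ geo r m := by
  unfold W wt geo
  rw [pow_add]
  have : (1 : ℝ≥0) ≤ (Nat.choose (2 * m none + xd m) (xd m) : ℝ≥0) := by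
    exact_mod_cast Nat.choose_pos (by omega)
  refine (div_le_self (by positivity) this).trans ?_
  gcongr

lemma geo_le_W {δ R r : ℝ≥0} (hδ : 4 * r ≤ δ) (hR : 2 * r ≤ R) (m : Option (Fin n) →₀ ℕ) :
    geo r m ≤ W δ R m := by
  unfold W wt geo
  rw [pow_add, le_div_iff₀ (choose_pos' _ _)]
  have : (Nat.choose (2 * m none + xd m) (xd m) : ℝ≥0) ≤ 2 ^ (2 * m none + xd m) := by
    exact_mod_cast Nat.choose_le_two_pow _ _
  calc _ ≤ r ^ m none * r ^ xd m * 2 ^ (2 * m none + xd m) := by gcongr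
    _ = (4 * r) ^ m none * (2 * r) ^ xd m := by
      rw [pow_add, pow_mul, mul_pow, mul_pow]; norm_num; ring
    _ ≤ _ := by gcongr

lemma W_mono_delta {δ δ' R : ℝ≥0} (h : δ ≤ δ') (m : Option (Fin n) →₀ ℕ) :
    W δ R m ≤ W δ' R m := by
  unfold W wt
  gcongr

end weight
end Fuchs

namespace Fuchs
open MvPowerSeries Finsupp
open scoped NNReal ENNReal

section formal
variable {n : ℕ}

/-- the inverse of `t ∂_t² + 2 ∂_t` -/
noncomputable def J (F : MvPowerSeries (Option (Fin n)) ℝ) : MvPowerSeries (Option (Fin n)) ℝ :=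
  fun m => if m none = 0 then 0 else
    coeff (m - single none 1) F / ((m none : ℝ) * ((m none : ℝ) + 1))

lemma coeff_J_zero (F : MvPowerSeries (Option (Fin n)) ℝ) (m : Option (Fin n) →₀ ℕ)
    (hm : m none = 0) : coeff m (J F) = 0 := by
  change J F m = 0
  simp [J, hm]

lemma coeff_J_add (F : MvPowerSeries (Option (Fin n)) ℝ) (m : Option (Fin n) →₀ ℕ) :
    coeff (m + single none 1) (J F) = coeff m F / (((m none : ℝ) + 1) * ((m none : ℝ) + 2)) := by
  change J F (m + single none 1) = _
  have : m + single none 1 - single none 1 = m := by simp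
  simp only [J, this]
  simp
  ring_nf

lemma e0_le {m : Option (Fin n) →₀ ℕ} (h : m none ≠ 0) : single none 1 ≤ m := by
  rw [Finsupp.single_le_iff]; omega

lemma coeff_X_mul_add (F : MvPowerSeries (Option (Fin n)) ℝ) (m : Option (Fin n) →₀ ℕ) :
    coeff (m + single none 1) ((X none : MvPowerSeries (Option (Fin n)) ℝ) * F) = coeff m F := by
  rw [X, add_comm, coeff_add_monomial_mul, one_mul]

lemma coeff_X_mul_zero (F : MvPowerSeries (Option (Fin n)) ℝ) (m : Option (Fin n) →₀ ℕ)
    (hm : m none = 0) : coeff m ((X none : MvPowerSeries (Option (Fin n)) ℝ) * F) = 0 := by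
  have := (X_dvd_iff (s := (none : Option (Fin n))) (φ := (X none : MvPowerSeries (Option (Fin n)) ℝ) * F)).1
    (Dvd.intro _ rfl)
  exact this m hm

lemma coeff_dx_zero {F : MvPowerSeries (Option (Fin n)) ℝ} (i : Fin n)
    (h : ∀ m : Option (Fin n) →₀ ℕ, m none = 0 → coeff m F = 0)
    (m : Option (Fin n) →₀ ℕ) (hm : m none = 0) : coeff m (pderiv ℝ (some i) F) = 0 := by
  rw [coeff_pderiv, h _ (by simp [hm]), zero_mul]

lemma h0_of {F : MvPowerSeries (Option (Fin n)) ℝ}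
    (h : ∀ m : Option (Fin n) →₀ ℕ, m none = 0 → coeff m F = 0) (m : Option (Fin n) →₀ ℕ)
    (hm : coeff m F ≠ 0) : single none 1 ≤ m :=
  e0_le fun h' => hm (h m h')

lemma W_add_e0 (δ R : ℝ≥0) (m : Option (Fin n) →₀ ℕ) :
    W δ R (m + single none 1) = wt δ R (m none + 1) (xd m) := by
  simp [W, xd_add, xd_none]

lemma W_add_ei (δ R : ℝ≥0) (m : Option (Fin n) →₀ ℕ) (i : Fin n) :
    W δ R (m + single (some i) 1) = wt δ R (m none) (xd m + 1) := by
  simp [W, xd_add, xd_some]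

lemma N_J {δ R η : ℝ≥0} (h1 : δ ≤ η)
    (F : MvPowerSeries (Option (Fin n)) ℝ) : Nw (W δ R) (J F) ≤ η * Nw (W δ R) F := by
  refine Nw_op _ F _ (single none 1) 0 (fun m => 1 / (((m none : ℝ≥0) + 1) * ((m none : ℝ≥0) + 2)))
    η (h0_of (coeff_J_zero F)) (fun m => ?_) fun m => ?_
  · rw [coeff_J_add, add_zero]; push_cast; ring
  · rw [W_add_e0, add_zero]
    calc _ ≤ 1 * wt δ R (m none + 1) (xd m) := by
          gcongr
          refine div_le_one_of_le₀ ?_ zero_le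
          norm_cast
          nlinarith
      _ ≤ δ * wt δ R (m none) (xd m) := by rw [one_mul]; exact wt_t _ _ _ _
      _ ≤ _ := by unfold W; gcongr

lemma N_XdJ {δ R η : ℝ≥0} (h1 : δ ≤ η)
    (F : MvPowerSeries (Option (Fin n)) ℝ) :
    Nw (W δ R) (X none * pderiv ℝ none (J F)) ≤ η * Nw (W δ R) F := by
  refine Nw_op _ F _ (single none 1) 0 (fun m => 1 / ((m none : ℝ≥0) + 2))
    η (h0_of (coeff_X_mul_zero _)) (fun m => ?_) fun m => ?_
  · rw [coeff_X_mul_add, coeff_pderiv, coeff_J_add, add_zero]; push_cast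
    have : (m none : ℝ) + 1 ≠ 0 := by positivity
    field_simp
  · rw [W_add_e0, add_zero]
    calc _ ≤ 1 * wt δ R (m none + 1) (xd m) := by
          gcongr
          refine div_le_one_of_le₀ ?_ zero_le
          norm_cast
          nlinarith
      _ ≤ δ * wt δ R (m none) (xd m) := by rw [one_mul]; exact wt_t _ _ _ _
      _ ≤ _ := by unfold W; gcongr

lemma N_dJ {δ R : ℝ≥0} (F : MvPowerSeries (Option (Fin n)) ℝ) :
    Nw (W δ R) (pderiv ℝ none (J F)) ≤ Nw (W δ R) F := by
  have := Nw_op (W δ R) F (pderiv ℝ none (J F)) 0 0 (fun m => 1 / ((m none : ℝ≥0) + 2))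
    1 (fun m _ => zero_le) (fun m => ?_) fun m => ?_
  · simpa using this
  · rw [add_zero, coeff_pderiv, coeff_J_add]; push_cast
    have : (m none : ℝ) + 1 ≠ 0 := by positivity
    field_simp
  · gcongr
    apply div_le_of_le_mul₀ <;> norm_num
    exact_mod_cast Nat.le_of_sub_eq_zero (by simp)

lemma add_e0_some (m : Option (Fin n) →₀ ℕ) (i : Fin n) :
    (m + single none 1 : Option (Fin n) →₀ ℕ) (some i) = m (some i) := by simp

lemma add_ei_none (m : Option (Fin n) →₀ ℕ) (i : Fin n) :
    (m + single (some i) 1 : Option (Fin n) →₀ ℕ) none = m none := by simp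

lemma N_dxJ {δ R η : ℝ≥0} (hR : 0 < R) (h1 : 2 * (δ / R) ≤ η)
    (F : MvPowerSeries (Option (Fin n)) ℝ) (i : Fin n) :
    Nw (W δ R) (pderiv ℝ (some i) (J F)) ≤ η * Nw (W δ R) F := by
  refine Nw_op _ F _ (single none 1) (single (some i) 1)
    (fun m => ((m (some i) : ℝ≥0) + 1) / (((m none : ℝ≥0) + 1) * ((m none : ℝ≥0) + 2)))
    η (h0_of (coeff_dx_zero i (coeff_J_zero F))) (fun m => ?_) fun m => ?_
  · rw [coeff_pderiv, add_right_comm, coeff_J_add, add_e0_some, add_ei_none]; push_cast; ring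
  · rw [W_add_e0, W_add_ei]
    have hm : (m (some i) : ℝ≥0) ≤ xd m := by exact_mod_cast le_xd m i
    calc _ ≤ ((xd m : ℝ≥0) + 1) / (((m none : ℝ≥0) + 1) * ((m none : ℝ≥0) + 2)) *
          wt δ R (m none + 1) (xd m) := by gcongr
      _ = (((xd m : ℝ≥0) + 1) * wt δ R (m none + 1) (xd m)) / (((m none : ℝ≥0) + 1) * ((m none : ℝ≥0) + 2)) := by
        ring
      _ ≤ ((2 * ((m none : ℝ≥0) + 1)) * (δ / R) * wt δ R (m none) (xd m + 1)) / (((m none : ℝ≥0) + 1) * 1) := by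
        refine div_le_div₀ zero_le (wt_x δ R hR _ _) (by positivity) ?_
        gcongr
        norm_cast
        omega
      _ = 2 * (δ / R) * wt δ R (m none) (xd m + 1) := by
        have : (m none : ℝ≥0) + 1 ≠ 0 := by positivity
        field_simp
      _ ≤ _ := by gcongr

lemma N_XdxdJ {δ R η : ℝ≥0} (hR : 0 < R) (h1 : 2 * (δ / R) ≤ η)
    (F : MvPowerSeries (Option (Fin n)) ℝ) (i : Fin n) :
    Nw (W δ R) (X none * pderiv ℝ (some i) (pderiv ℝ none (J F))) ≤ η * Nw (W δ R) F := by
  refine Nw_op _ F _ (single none 1) (single (some i) 1)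
    (fun m => ((m (some i) : ℝ≥0) + 1) / ((m none : ℝ≥0) + 2))
    η (h0_of (coeff_X_mul_zero _)) (fun m => ?_) fun m => ?_
  · rw [coeff_X_mul_add, coeff_pderiv, coeff_pderiv, coeff_J_add, add_ei_none]; push_cast
    have : (m none : ℝ) + 1 ≠ 0 := by positivity
    field_simp
  · rw [W_add_e0, W_add_ei]
    have hm : (m (some i) : ℝ≥0) ≤ xd m := by exact_mod_cast le_xd m i
    calc _ ≤ ((xd m : ℝ≥0) + 1) / ((m none : ℝ≥0) + 2) *
          wt δ R (m none + 1) (xd m) := by gcongr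
      _ = (((xd m : ℝ≥0) + 1) * wt δ R (m none + 1) (xd m)) / ((m none : ℝ≥0) + 2) := by
        ring
      _ ≤ ((2 * ((m none : ℝ≥0) + 1)) * (δ / R) * wt δ R (m none) (xd m + 1)) / ((m none : ℝ≥0) + 1) := by
        refine div_le_div₀ zero_le (wt_x δ R hR _ _) (by positivity) ?_
        gcongr
        norm_num
      _ = 2 * (δ / R) * wt δ R (m none) (xd m + 1) := by
        have : (m none : ℝ≥0) + 1 ≠ 0 := by positivity
        field_simp
      _ ≤ _ := by gcongr

lemma N_dxdxJ {δ R η : ℝ≥0} (hR : 0 < R) (h1 : 4 * (δ / R ^ 2) ≤ η)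
    (F : MvPowerSeries (Option (Fin n)) ℝ) (i j : Fin n) :
    Nw (W δ R) (pderiv ℝ (some i) (pderiv ℝ (some j) (J F))) ≤ η * Nw (W δ R) F := by
  refine Nw_op _ F _ (single none 1) (single (some i) 1 + single (some j) 1)
    (fun m => (((m (some i) : ℝ≥0) + 1) * (((m + single (some i) 1 : Option (Fin n) →₀ ℕ) (some j) : ℝ≥0) + 1))
      / (((m none : ℝ≥0) + 1) * ((m none : ℝ≥0) + 2)))
    η (h0_of (coeff_dx_zero i (coeff_dx_zero j (coeff_J_zero F)))) (fun m => ?_) fun m => ?_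
  · rw [coeff_pderiv, coeff_pderiv, add_right_comm m, add_right_comm (m + _), coeff_J_add,
      add_e0_some, add_e0_some, add_ei_none, add_ei_none, ← add_assoc]; push_cast; ring
  · rw [W_add_e0, ← add_assoc, W_add_ei, add_ei_none, xd_add, xd_some]
    have hm : (m (some i) : ℝ≥0) ≤ xd m := by exact_mod_cast le_xd m i
    have hm2 : ((m + single (some i) 1 : Option (Fin n) →₀ ℕ) (some j) : ℝ≥0) ≤ xd m + 1 := by
      have := le_xd (m + single (some i) 1) j
      rw [xd_add, xd_some] at this
      exact_mod_cast this
    calc _ ≤ (((xd m : ℝ≥0) + 1) * (xd m + 1 + 1)) / (((m none : ℝ≥0) + 1) * ((m none : ℝ≥0) + 2)) *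
          wt δ R (m none + 1) (xd m) := by gcongr
      _ = (((xd m : ℝ≥0) + 1) * (xd m + 2) * wt δ R (m none + 1) (xd m)) / (((m none : ℝ≥0) + 1) * ((m none : ℝ≥0) + 2)) := by
        ring
      _ ≤ (4 * (((m none : ℝ≥0) + 1) * ((m none : ℝ≥0) + 2)) * (δ / R ^ 2) * wt δ R (m none) (xd m + 2)) / (((m none : ℝ≥0) + 1) * ((m none : ℝ≥0) + 2)) := by
        exact div_le_div₀ zero_le (wt_xx δ R hR _ _) (by positivity) le_rfl
      _ = 4 * (δ / R ^ 2) * wt δ R (m none) (xd m + 2) := by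
        have : ((m none : ℝ≥0) + 1) * ((m none : ℝ≥0) + 2) ≠ 0 := by positivity
        rw [div_eq_iff this]; ring
      _ ≤ _ := by rw [add_assoc]; gcongr

/-! ### abstract fixed point -/

lemma X_pow_dvd_all {F : MvPowerSeries (Option (Fin n)) ℝ}
    (h : ∀ k : ℕ, (X none : MvPowerSeries (Option (Fin n)) ℝ) ^ k ∣ F) : F = 0 := by
  ext m
  exact X_pow_dvd_iff.1 (h (m none + 1)) m (Nat.lt_succ_self _)

def Causal (T : MvPowerSeries (Option (Fin n)) ℝ → MvPowerSeries (Option (Fin n)) ℝ) : Prop :=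
  ∀ (k : ℕ) F G, (X none : MvPowerSeries (Option (Fin n)) ℝ) ^ k ∣ F - G →
    (X none : MvPowerSeries (Option (Fin n)) ℝ) ^ (k + 1) ∣ T F - T G

lemma Causal.unique {T : MvPowerSeries (Option (Fin n)) ℝ → MvPowerSeries (Option (Fin n)) ℝ}
    (hT : Causal T) {F G} (hF : T F = F) (hG : T G = G) : F = G := by
  refine sub_eq_zero.1 (X_pow_dvd_all fun k => ?_)
  induction k with
  | zero => simp
  | succ k ih => have := hT k F G ih; rwa [hF, hG] at this

lemma Causal.exists {T : MvPowerSeries (Option (Fin n)) ℝ → MvPowerSeries (Option (Fin n)) ℝ}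
    (hT : Causal T) (w : (Option (Fin n) →₀ ℕ) → ℝ≥0) (K : ℝ≥0∞)
    (hK : ∀ F, Nw w F ≤ K → Nw w (T F) ≤ K) : ∃ F, T F = F ∧ Nw w F ≤ K := by
  set u : ℕ → MvPowerSeries (Option (Fin n)) ℝ := fun k => T^[k] 0 with hu
  have hs : ∀ k, u (k + 1) = T (u k) := fun k => Function.iterate_succ_apply' _ _ _
  have hN : ∀ k, Nw w (u k) ≤ K := by
    intro k
    induction k with
    | zero => simp [hu, Nw_zero]
    | succ k ih => rw [hs]; exact hK _ ih
  have hd : ∀ k, (X none : MvPowerSeries (Option (Fin n)) ℝ) ^ k ∣ u (k + 1) - u k := by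
    intro k
    induction k with
    | zero => simp
    | succ k ih => have := hT k _ _ ih; rwa [← hs, ← hs] at this
  have hd2 : ∀ k l, (X none : MvPowerSeries (Option (Fin n)) ℝ) ^ k ∣ u (k + l) - u k := by
    intro k l
    induction l with
    | zero => simp
    | succ l ih =>
      have h1 := (pow_dvd_pow (X none : MvPowerSeries (Option (Fin n)) ℝ) (Nat.le_add_right k l)).trans (hd (k + l))
      have := dvd_add h1 ih
      simpa [add_assoc] using this
  let F : MvPowerSeries (Option (Fin n)) ℝ := fun m => coeff m (u (m none + 1))
  have hF : ∀ m, coeff m F = coeff m (u (m none + 1)) := fun m => rfl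
  have hFu : ∀ k, (X none : MvPowerSeries (Option (Fin n)) ℝ) ^ k ∣ F - u k := by
    intro k
    rw [X_pow_dvd_iff]
    intro m hm
    have h1 := hd2 (m none + 1) (k - (m none + 1))
    rw [Nat.add_sub_cancel' hm] at h1
    have h2 := X_pow_dvd_iff.1 h1 m (Nat.lt_succ_self _)
    rw [map_sub] at h2 ⊢
    rw [hF]; linarith
  refine ⟨F, ?_, ?_⟩
  · refine sub_eq_zero.1 (X_pow_dvd_all fun k => ?_)
    have h1 := hT k _ _ (hFu k)
    have h2 := hFu (k + 1)
    rw [← hs] at h1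
    have := dvd_sub h1 h2
    rw [sub_sub_sub_cancel_right] at this
    exact (pow_dvd_pow _ (Nat.le_succ k)).trans this
  · unfold Nw
    rw [ENNReal.tsum_eq_iSup_sum]
    refine iSup_le fun s => ?_
    obtain ⟨k, hk⟩ : ∃ k, ∀ m ∈ s, m none < k :=
      ⟨s.sup (fun m => m none) + 1, fun m hm => Nat.lt_succ_of_le (Finset.le_sup (f := fun m : Option (Fin n) →₀ ℕ => m none) hm)⟩
    refine le_trans ?_ (hN k)
    unfold Nw
    refine le_trans (le_of_eq (Finset.sum_congr rfl fun m hm => ?_)) (ENNReal.sum_le_tsum s)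
    have h2 := X_pow_dvd_iff.1 (hFu k) m (hk m hm)
    rw [map_sub, sub_eq_zero] at h2
    rw [h2]

end formal
end Fuchs

namespace Fuchs
open MvPowerSeries Finsupp
open scoped NNReal ENNReal

/-- coefficients of the equation -/
structure Co (A : Type*) (n : ℕ) where
  α : A
  β : A
  p0 : A
  r0 : A
  q0 : A
  p : Fin n → A
  r : Fin n → A
  q1 : Fin n → A
  q2 : Fin n → Fin n → A
  s : Fin n → Fin n → A

/-- right-hand side as a polynomial in `v`, `w = t v_t`, `z = t v_t²`, `xv i = ∂_i v`,
`xw i = t ∂_i v_t`, `xxv i j = ∂_i ∂_j v` -/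
def rhs {A : Type*} [CommRing A] {n : ℕ} (c : Co A n) (v w z : A) (xv xw : Fin n → A)
    (xxv : Fin n → Fin n → A) : A :=
  c.α + (c.p0 * w + ∑ i, c.p i * xw i) + (c.q0 * v + ∑ i, c.q1 i * xv i + ∑ i, ∑ j, c.q2 i j * xxv i j)
    + c.β * z + (c.r0 * v + ∑ i, c.r i * xv i) * w + ∑ i, ∑ j, c.s i j * xv i * xv j

section
variable {n : ℕ}

lemma rhs_dvd {A : Type*} [CommRing A] (d : A) (c : Co A n) {v w z v' w' z' : A} {xv xw xv' xw' : Fin n → A}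
    {xxv xxv' : Fin n → Fin n → A} (h1 : d ∣ v - v') (h2 : d ∣ w - w') (h3 : d ∣ z - z')
    (h4 : ∀ i, d ∣ xv i - xv' i) (h5 : ∀ i, d ∣ xw i - xw' i)
    (h6 : ∀ i j, d ∣ xxv i j - xxv' i j) :
    d ∣ rhs c v w z xv xw xxv - rhs c v' w' z' xv' xw' xxv' := by
  simp only [← Ideal.mem_span_singleton, ← Ideal.Quotient.eq] at *
  simp only [rhs, map_add, map_mul, map_sum, h1, h2, h3, h4, h5, h6]

/-- the right-hand side on power series -/
noncomputable def rhsPS (c : Co (MvPowerSeries (Option (Fin n)) ℝ) n) (v : MvPowerSeries (Option (Fin n)) ℝ) :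
    MvPowerSeries (Option (Fin n)) ℝ :=
  rhs c v (X none * pderiv ℝ none v) (X none * pderiv ℝ none v * pderiv ℝ none v)
    (fun i => pderiv ℝ (some i) v) (fun i => X none * pderiv ℝ (some i) (pderiv ℝ none v))
    (fun i j => pderiv ℝ (some i) (pderiv ℝ (some j) v))

lemma J_sub (F G : MvPowerSeries (Option (Fin n)) ℝ) : J F - J G = J (F - G) := by
  ext m
  by_cases h : m none = 0
  · rw [map_sub, coeff_J_zero _ _ h, coeff_J_zero _ _ h, coeff_J_zero _ _ h, sub_zero]
  · have e : m = (m - single none 1) + single none 1 := (tsub_add_cancel_of_le (e0_le h)).symm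
    rw [e, map_sub, coeff_J_add, coeff_J_add, coeff_J_add, map_sub]; ring

lemma J_dvd {k : ℕ} {D : MvPowerSeries (Option (Fin n)) ℝ}
    (h : (X none : MvPowerSeries (Option (Fin n)) ℝ) ^ k ∣ D) :
    (X none : MvPowerSeries (Option (Fin n)) ℝ) ^ (k + 1) ∣ J D := by
  rw [X_pow_dvd_iff] at *
  intro m hm
  by_cases h0 : m none = 0
  · exact coeff_J_zero _ _ h0
  · have e : m = (m - single none 1) + single none 1 := (tsub_add_cancel_of_le (e0_le h0)).symm
    rw [e, coeff_J_add, h, zero_div]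
    simp; omega

lemma dx_dvd {k : ℕ} {D : MvPowerSeries (Option (Fin n)) ℝ} (i : Fin n)
    (h : (X none : MvPowerSeries (Option (Fin n)) ℝ) ^ k ∣ D) :
    (X none : MvPowerSeries (Option (Fin n)) ℝ) ^ k ∣ pderiv ℝ (some i) D := by
  rw [X_pow_dvd_iff] at *
  intro m hm
  rw [coeff_pderiv, h _ (by simpa using hm), zero_mul]

lemma dt_dvd {k : ℕ} {D : MvPowerSeries (Option (Fin n)) ℝ}
    (h : (X none : MvPowerSeries (Option (Fin n)) ℝ) ^ (k + 1) ∣ D) :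
    (X none : MvPowerSeries (Option (Fin n)) ℝ) ^ k ∣ pderiv ℝ none D := by
  rw [X_pow_dvd_iff] at *
  intro m hm
  rw [coeff_pderiv, h _ (by simpa using hm), zero_mul]

lemma Xmul_dvd {k : ℕ} {D : MvPowerSeries (Option (Fin n)) ℝ}
    (h : (X none : MvPowerSeries (Option (Fin n)) ℝ) ^ k ∣ D) :
    (X none : MvPowerSeries (Option (Fin n)) ℝ) ^ (k + 1) ∣ X none * D := by
  rw [pow_succ']; exact mul_dvd_mul_left _ h

lemma rhsPS_causal (c : Co (MvPowerSeries (Option (Fin n)) ℝ) n) (g : MvPowerSeries (Option (Fin n)) ℝ) :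
    Causal (fun F => rhsPS c (g + J F)) := by
  intro k F G h
  have hv : (X none : MvPowerSeries (Option (Fin n)) ℝ) ^ (k + 1) ∣ (g + J F) - (g + J G) := by
    rw [add_sub_add_left_eq_sub, J_sub]; exact J_dvd h
  show _ ∣ rhsPS c (g + J F) - rhsPS c (g + J G)
  generalize g + J F = v at *
  generalize g + J G = v' at *
  refine rhs_dvd _ c hv ?_ ?_ (fun i => ?_) (fun i => ?_) (fun i j => ?_)
  · rw [← mul_sub, ← map_sub]; exact Xmul_dvd (dt_dvd hv)
  · have e : X none * pderiv ℝ none v * pderiv ℝ none v - X none * pderiv ℝ none v' * pderiv ℝ none v'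
      = (X none * pderiv ℝ none (v - v')) * (pderiv ℝ none v + pderiv ℝ none v') := by
      rw [map_sub]; ring
    rw [e]; exact (Xmul_dvd (dt_dvd hv)).mul_right _
  · simp only [← map_sub]; exact dx_dvd i hv
  · simp only [← mul_sub, ← map_sub]; exact Xmul_dvd (dx_dvd i (dt_dvd hv))
  · simp only [← map_sub]; exact dx_dvd i (dx_dvd j hv)

/-- the left-hand side on power series -/
noncomputable def lhsPS (v : MvPowerSeries (Option (Fin n)) ℝ) : MvPowerSeries (Option (Fin n)) ℝ :=
  X none * pderiv ℝ none (pderiv ℝ none v) + 2 * pderiv ℝ none v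

lemma coeff_lhsPS (v : MvPowerSeries (Option (Fin n)) ℝ) (m : Option (Fin n) →₀ ℕ) :
    coeff m (lhsPS v) = ((m none : ℝ) + 1) * ((m none : ℝ) + 2) * coeff (m + single none 1) v := by
  have h2 : coeff m (2 * pderiv ℝ none v) = 2 * coeff m (pderiv ℝ none v) := by
    rw [two_mul, map_add]; ring
  rw [lhsPS, map_add, h2, coeff_pderiv]
  by_cases h : m none = 0
  · rw [coeff_X_mul_zero _ _ h, h]; simp
  · have e : m = (m - single none 1) + single none 1 := (tsub_add_cancel_of_le (e0_le h)).symm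
    generalize m - single none 1 = m' at e
    subst e
    rw [coeff_X_mul_add, coeff_pderiv, coeff_pderiv]
    simp
    ring

lemma lhsPS_J (g F : MvPowerSeries (Option (Fin n)) ℝ)
    (hg : ∀ m : Option (Fin n) →₀ ℕ, m none ≠ 0 → coeff m g = 0) : lhsPS (g + J F) = F := by
  ext m
  rw [coeff_lhsPS, map_add, coeff_J_add, hg _ (by simp)]
  field_simp
  simp

lemma J_lhsPS (g v : MvPowerSeries (Option (Fin n)) ℝ)
    (hg : ∀ m : Option (Fin n) →₀ ℕ, m none ≠ 0 → coeff m g = 0)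
    (hv : ∀ m : Option (Fin n) →₀ ℕ, m none = 0 → coeff m v = coeff m g) : g + J (lhsPS v) = v := by
  ext m
  by_cases h : m none = 0
  · rw [map_add, coeff_J_zero _ _ h, hv m h, add_zero]
  · rw [map_add, hg m h, zero_add]
    have e : m = (m - single none 1) + single none 1 := (tsub_add_cancel_of_le (e0_le h)).symm
    rw [e, coeff_J_add, coeff_lhsPS]
    field_simp

/-- formal uniqueness -/
lemma formal_unique (c : Co (MvPowerSeries (Option (Fin n)) ℝ) n) (g v v' : MvPowerSeries (Option (Fin n)) ℝ)
    (hg : ∀ m : Option (Fin n) →₀ ℕ, m none ≠ 0 → coeff m g = 0)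
    (hv : ∀ m : Option (Fin n) →₀ ℕ, m none = 0 → coeff m v = coeff m g)
    (hv' : ∀ m : Option (Fin n) →₀ ℕ, m none = 0 → coeff m v' = coeff m g)
    (h : lhsPS v = rhsPS c v) (h' : lhsPS v' = rhsPS c v') : v = v' := by
  have e := J_lhsPS g v hg hv
  have e' := J_lhsPS g v' hg hv'
  have : lhsPS v = lhsPS v' := (rhsPS_causal c g).unique
    (by show rhsPS c (g + J (lhsPS v)) = lhsPS v; rw [e, h])
    (by show rhsPS c (g + J (lhsPS v')) = lhsPS v'; rw [e', h'])
  rw [← e, ← e', this]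

lemma Nw_mul_le {w : (Option (Fin n) →₀ ℕ) → ℝ≥0} (hw : ∀ a b, w (a + b) ≤ w a * w b)
    {F G : MvPowerSeries (Option (Fin n)) ℝ} {a b : ℝ≥0∞} (hF : Nw w F ≤ a) (hG : Nw w G ≤ b) :
    Nw w (F * G) ≤ a * b := (Nw_mul w hw F G).trans (mul_le_mul' hF hG)

lemma Nw_add_le {w : (Option (Fin n) →₀ ℕ) → ℝ≥0}
    {F G : MvPowerSeries (Option (Fin n)) ℝ} {a b : ℝ≥0∞} (hF : Nw w F ≤ a) (hG : Nw w G ≤ b) :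
    Nw w (F + G) ≤ a + b := (Nw_add w F G).trans (add_le_add hF hG)

lemma Nw_sum_le {w : (Option (Fin n) →₀ ℕ) → ℝ≥0}
    {F : Fin n → MvPowerSeries (Option (Fin n)) ℝ} {a : ℝ≥0∞} (hF : ∀ i, Nw w (F i) ≤ a) :
    Nw w (∑ i, F i) ≤ n * a := (Nw_sum w _ F).trans ((Finset.sum_le_sum fun i _ => hF i).trans (by simp))

/-- all coefficients have norm at most `M` -/
structure Co.Bdd (c : Co (MvPowerSeries (Option (Fin n)) ℝ) n) (w : (Option (Fin n) →₀ ℕ) → ℝ≥0) (M : ℝ≥0∞) : Prop where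
  α : Nw w c.α ≤ M
  β : Nw w c.β ≤ M
  p0 : Nw w c.p0 ≤ M
  r0 : Nw w c.r0 ≤ M
  q0 : Nw w c.q0 ≤ M
  p : ∀ i, Nw w (c.p i) ≤ M
  r : ∀ i, Nw w (c.r i) ≤ M
  q1 : ∀ i, Nw w (c.q1 i) ≤ M
  q2 : ∀ i j, Nw w (c.q2 i j) ≤ M
  s : ∀ i j, Nw w (c.s i j) ≤ M

lemma rhs_bound {w : (Option (Fin n) →₀ ℕ) → ℝ≥0} (hw : ∀ a b, w (a + b) ≤ w a * w b)
    {c : Co (MvPowerSeries (Option (Fin n)) ℝ) n} {M : ℝ≥0∞} (hc : c.Bdd w M)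
    {v ww z : MvPowerSeries (Option (Fin n)) ℝ} {xv xw : Fin n → MvPowerSeries (Option (Fin n)) ℝ}
    {xxv : Fin n → Fin n → MvPowerSeries (Option (Fin n)) ℝ} {a b d : ℝ≥0∞}
    (h1 : Nw w v ≤ a) (h2 : Nw w ww ≤ b) (h3 : Nw w z ≤ d) (h4 : ∀ i, Nw w (xv i) ≤ a)
    (h5 : ∀ i, Nw w (xw i) ≤ b) (h6 : ∀ i j, Nw w (xxv i j) ≤ a) :
    Nw w (rhs c v ww z xv xw xxv) ≤
      M + (M * b + n * (M * b)) + (M * a + n * (M * a) + n * (n * (M * a))) + M * d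
      + (M * a + n * (M * a)) * b + n * (n * (M * a * a)) := by
  unfold rhs
  refine Nw_add_le (Nw_add_le (Nw_add_le (Nw_add_le (Nw_add_le hc.α ?_) ?_) ?_) ?_) ?_
  · exact Nw_add_le (Nw_mul_le hw hc.p0 h2) (Nw_sum_le fun i => Nw_mul_le hw (hc.p i) (h5 i))
  · exact Nw_add_le (Nw_add_le (Nw_mul_le hw hc.q0 h1) (Nw_sum_le fun i => Nw_mul_le hw (hc.q1 i) (h4 i)))
      (Nw_sum_le fun i => Nw_sum_le fun j => Nw_mul_le hw (hc.q2 i j) (h6 i j))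
  · exact Nw_mul_le hw hc.β h3
  · exact Nw_mul_le hw (Nw_add_le (Nw_mul_le hw hc.r0 h1)
      (Nw_sum_le fun i => Nw_mul_le hw (hc.r i) (h4 i))) h2
  · exact Nw_sum_le fun i => Nw_sum_le fun j => Nw_mul_le hw (Nw_mul_le hw (hc.s i j) (h4 i)) (h4 j)

lemma exists_eta (n : ℕ) (M : ℝ≥0) : ∃ K η : ℝ≥0, 0 < η ∧
    M + (M * (η * K) + n * (M * (η * K))) + (M * (M + η * K) + n * (M * (M + η * K)) + n * (n * (M * (M + η * K)))) + M * (η * K * K)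
      + (M * (M + η * K) + n * (M * (M + η * K))) * (η * K) + n * (n * (M * (M + η * K) * (M + η * K))) ≤ K := by
  set f : ℝ≥0 → ℝ≥0 → ℝ≥0 := fun K η => M + (M * (η * K) + n * (M * (η * K))) + (M * (M + η * K) + n * (M * (M + η * K)) + n * (n * (M * (M + η * K)))) + M * (η * K * K)
      + (M * (M + η * K) + n * (M * (M + η * K))) * (η * K) + n * (n * (M * (M + η * K) * (M + η * K))) with hf
  set K : ℝ≥0 := f 0 0 + 1 with hK
  have h0 : f K 0 < K := by
    have : f K 0 = f 0 0 := by simp [hf]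
    rw [this, hK]; exact lt_add_one _
  have hcont : Continuous (f K) := by simp only [hf]; fun_prop
  have hev : ∀ᶠ η in nhds (0 : ℝ≥0), f K η < K := hcont.continuousAt.eventually_lt continuousAt_const h0
  have hev2 := hev.filter_mono (nhdsWithin_le_nhds (s := Set.Ioi 0))
  obtain ⟨η, hη, hpos⟩ := (hev2.and self_mem_nhdsWithin).exists
  exact ⟨K, η, hpos, hη.le⟩

/-- formal existence with convergence -/
lemma formal_exists (c : Co (MvPowerSeries (Option (Fin n)) ℝ) n) (g : MvPowerSeries (Option (Fin n)) ℝ)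
    (hg : ∀ m : Option (Fin n) →₀ ℕ, m none ≠ 0 → coeff m g = 0) {r M : ℝ≥0} (hr : 0 < r)
    (hc : c.Bdd (geo r) M) (hg0 : Nw (geo r) g ≤ M)
    (hg1 : ∀ i, Nw (geo r) (pderiv ℝ (some i) g) ≤ M)
    (hg2 : ∀ i j, Nw (geo r) (pderiv ℝ (some i) (pderiv ℝ (some j) g)) ≤ M) :
    ∃ v, lhsPS v = rhsPS c v ∧ (∀ m : Option (Fin n) →₀ ℕ, m none = 0 → coeff m v = coeff m g) ∧
      ∃ ρ : ℝ≥0, 0 < ρ ∧ Nw (geo ρ) v ≠ ⊤ := by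
  obtain ⟨K, η, hη, hKη⟩ := exists_eta n M
  obtain ⟨δ, hδ, hδr, h1, h2, h3⟩ : ∃ δ : ℝ≥0, 0 < δ ∧ δ ≤ r ∧ δ ≤ η ∧ 2 * (δ / r) ≤ η ∧ 4 * (δ / r ^ 2) ≤ η := by
    refine ⟨min (min r η) (min (η * r / 2) (η * r ^ 2 / 4)), by positivity,
      (min_le_left _ _).trans (min_le_left _ _), (min_le_left _ _).trans (min_le_right _ _), ?_, ?_⟩
    · calc _ ≤ 2 * ((η * r / 2) / r) := by
            gcongr; exact (min_le_right _ _).trans (min_le_left _ _)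
        _ = η := by field_simp
    · calc _ ≤ 4 * ((η * r ^ 2 / 4) / r ^ 2) := by
            gcongr; exact (min_le_right _ _).trans (min_le_right _ _)
        _ = η := by field_simp
  have hW : ∀ F : MvPowerSeries (Option (Fin n)) ℝ, Nw (W δ r) F ≤ Nw (geo r) F :=
    fun F => Nw_mono _ _ (fun m => W_le_geo hδr le_rfl m) F
  have hcW : c.Bdd (W δ r) M := ⟨(hW _).trans hc.α, (hW _).trans hc.β, (hW _).trans hc.p0,
    (hW _).trans hc.r0, (hW _).trans hc.q0, fun i => (hW _).trans (hc.p i),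
    fun i => (hW _).trans (hc.r i), fun i => (hW _).trans (hc.q1 i),
    fun i j => (hW _).trans (hc.q2 i j), fun i j => (hW _).trans (hc.s i j)⟩
  have hdg : pderiv ℝ none g = 0 := by
    ext m
    rw [coeff_pderiv, hg _ (by simp), zero_mul, map_zero]
  obtain ⟨F, hF, hFK⟩ := (rhsPS_causal c g).exists (W δ r) K (by
    intro F hF
    refine le_trans (rhs_bound (a := M + η * K) (b := η * K) (d := η * K * K) (W_submul δ r) hcW
      ?_ ?_ ?_ (fun i => ?_) (fun i => ?_) (fun i j => ?_)) (by exact_mod_cast hKη)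
    · exact Nw_add_le ((hW _).trans hg0) ((N_J h1 F).trans (mul_le_mul_right hF _))
    · rw [map_add, hdg, zero_add]
      exact (N_XdJ h1 F).trans (mul_le_mul_right hF _)
    · rw [map_add, hdg, zero_add]
      exact Nw_mul_le (W_submul δ r) ((N_XdJ h1 F).trans (mul_le_mul_right hF _)) ((N_dJ F).trans hF)
    · rw [map_add]
      exact Nw_add_le ((hW _).trans (hg1 i)) ((N_dxJ hr h2 F i).trans (mul_le_mul_right hF _))
    · rw [map_add, hdg, zero_add]
      exact (N_XdxdJ hr h2 F i).trans (mul_le_mul_right hF _)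
    · rw [map_add, map_add]
      exact Nw_add_le ((hW _).trans (hg2 i j)) ((N_dxdxJ hr h3 F i j).trans (mul_le_mul_right hF _)))
  refine ⟨g + J F, ?_, fun m hm => ?_, min (δ / 4) (r / 2), by positivity, ?_⟩
  · rw [lhsPS_J g F hg]; exact hF.symm
  · rw [map_add, coeff_J_zero _ _ hm, add_zero]
  · have : Nw (geo (min (δ / 4) (r / 2))) (g + J F) ≤ ((M + η * K : ℝ≥0) : ℝ≥0∞) := by
      refine (Nw_mono _ (W δ r) (fun m => geo_le_W ?_ ?_ m) _).trans ?_
      · calc _ ≤ 4 * (δ / 4) := by gcongr; exact min_le_left _ _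
          _ = δ := by field_simp
      · calc _ ≤ 2 * (r / 2) := by gcongr; exact min_le_right _ _
          _ = r := by field_simp
      · push_cast
        exact Nw_add_le ((hW _).trans hg0) ((N_J h1 F).trans (mul_le_mul_right hFK _))
    exact ne_top_of_le_ne_top ENNReal.coe_ne_top this

end
end Fuchs

namespace Fuchs
open MvPowerSeries Finsupp
open scoped NNReal ENNReal

section germs
variable {n : ℕ}

/-- monomials -/
def mon (m : Option (Fin n) →₀ ℕ) (y : Option (Fin n) → ℝ) : ℝ := ∏ i, y i ^ m i

lemma mon_add (a b : Option (Fin n) →₀ ℕ) (y : Option (Fin n) → ℝ) :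
    mon (a + b) y = mon a y * mon b y := by
  simp [mon, pow_add, Finset.prod_mul_distrib]

lemma mon_zero (y : Option (Fin n) → ℝ) : mon 0 y = 1 := by simp [mon]

lemma mon_single (i : Option (Fin n)) (y : Option (Fin n) → ℝ) : mon (single i 1) y = y i := by
  classical
  rw [mon, Finset.prod_eq_single i]
  · simp
  · intro j _ hj; simp [Finsupp.single_apply, hj.symm]
  · simp

lemma geo_eq (r : ℝ≥0) (m : Option (Fin n) →₀ ℕ) : geo r m = ∏ i, r ^ m i := by
  rw [geo, Fintype.prod_option, pow_add, xd, Finset.prod_pow_eq_pow_sum]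

lemma abs_mon_le {r : ℝ≥0} {y : Option (Fin n) → ℝ} (hy : ‖y‖ ≤ r) (m : Option (Fin n) →₀ ℕ) :
    |mon m y| ≤ geo r m := by
  rw [geo_eq, mon, Finset.abs_prod]
  push_cast
  refine Finset.prod_le_prod (fun i _ => abs_nonneg _) fun i _ => ?_
  rw [abs_pow]
  exact pow_le_pow_left₀ (abs_nonneg _) ((norm_le_pi_norm y i).trans hy) _

lemma geo_mono {r s : ℝ≥0} (h : r ≤ s) (m : Option (Fin n) →₀ ℕ) : geo r m ≤ geo s m :=
  pow_le_pow_left' h _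

lemma Nw_summable {w : (Option (Fin n) →₀ ℕ) → ℝ≥0} {a : MvPowerSeries (Option (Fin n)) ℝ}
    (h : Nw w a ≠ ⊤) : Summable fun m => |coeff m a| * (w m : ℝ) := by
  have := ENNReal.tsum_coe_ne_top_iff_summable.1 h
  have h2 := NNReal.summable_coe.2 this
  simpa using h2

lemma summable_ev {r : ℝ≥0} {a : MvPowerSeries (Option (Fin n)) ℝ} (h : Nw (geo r) a ≠ ⊤)
    {y : Option (Fin n) → ℝ} (hy : ‖y‖ ≤ r) : Summable fun m => ‖coeff m a * mon m y‖ := by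
  refine Summable.of_nonneg_of_le (fun m => norm_nonneg _) (fun m => ?_) (Nw_summable h)
  rw [norm_mul]
  exact mul_le_mul_of_nonneg_left (abs_mon_le hy m) (abs_nonneg _)

/-- `f` is the sum of the convergent power series `a` near `0` -/
def PS (a : MvPowerSeries (Option (Fin n)) ℝ) (f : (Option (Fin n) → ℝ) → ℝ) : Prop :=
  ∃ r : ℝ≥0, 0 < r ∧ Nw (geo r) a ≠ ⊤ ∧ ∀ y, ‖y‖ < r → f y = ∑' m, coeff m a * mon m y

lemma PS.of_ev {a : MvPowerSeries (Option (Fin n)) ℝ} {r : ℝ≥0} (hr : 0 < r) (h : Nw (geo r) a ≠ ⊤) :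
    PS a (fun y => ∑' m, coeff m a * mon m y) := ⟨r, hr, h, fun _ _ => rfl⟩

lemma ball_ev {r : ℝ≥0} (hr : 0 < r) : ∀ᶠ y : Option (Fin n) → ℝ in nhds 0, ‖y‖ < r := by
  have := Metric.ball_mem_nhds (0 : Option (Fin n) → ℝ) (ε := r) (by exact_mod_cast hr)
  filter_upwards [this] with y hy
  simpa using hy

lemma PS.congr {a : MvPowerSeries (Option (Fin n)) ℝ} {f g : (Option (Fin n) → ℝ) → ℝ} (h : PS a f)
    (hfg : f =ᶠ[nhds 0] g) : PS a g := by
  obtain ⟨r, hr, h1, h2⟩ := h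
  obtain ⟨ε, hε, h3⟩ := Metric.eventually_nhds_iff.1 hfg
  lift ε to ℝ≥0 using hε.le
  replace hε : 0 < ε := by exact_mod_cast hε
  refine ⟨min r ε, lt_min hr hε, ne_top_of_le_ne_top h1 (Nw_mono _ _ (fun m => geo_mono (min_le_left _ _) m) _), ?_⟩
  intro y hy
  have hy' : ‖y‖ < r ∧ ‖y‖ < ε := by
    rw [NNReal.coe_min] at hy; exact ⟨hy.trans_le (min_le_left _ _), hy.trans_le (min_le_right _ _)⟩
  rw [← h2 y hy'.1]
  exact (h3 (by simpa using hy'.2)).symm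

lemma Nw_ne_top_mono {r s : ℝ≥0} (h : r ≤ s) {a : MvPowerSeries (Option (Fin n)) ℝ} (ha : Nw (geo s) a ≠ ⊤) :
    Nw (geo r) a ≠ ⊤ := ne_top_of_le_ne_top ha (Nw_mono _ _ (geo_mono h) _)

lemma PS.add {a b : MvPowerSeries (Option (Fin n)) ℝ} {f g : (Option (Fin n) → ℝ) → ℝ} (hf : PS a f)
    (hg : PS b g) : PS (a + b) (fun y => f y + g y) := by
  obtain ⟨r, hr, h1, h2⟩ := hf
  obtain ⟨s, hs, h3, h4⟩ := hg
  have h1' := Nw_ne_top_mono (min_le_left r s) h1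
  have h3' := Nw_ne_top_mono (min_le_right r s) h3
  refine ⟨min r s, lt_min hr hs, ne_top_of_le_ne_top (ENNReal.add_ne_top.2 ⟨h1', h3'⟩) (Nw_add _ _ _), ?_⟩
  intro y hy
  have hy' : ‖y‖ < r ∧ ‖y‖ < s := by
    rw [NNReal.coe_min] at hy; exact ⟨hy.trans_le (min_le_left _ _), hy.trans_le (min_le_right _ _)⟩
  beta_reduce
  rw [h2 y hy'.1, h4 y hy'.2, ← Summable.tsum_add (summable_ev h1 hy'.1.le).of_norm (summable_ev h3 hy'.2.le).of_norm]
  simp [add_mul]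

lemma tsum_mul_gen {A : Type*} [AddCommMonoid A] [Finset.HasAntidiagonal A] (F G : A → ℝ)
    (s1 : Summable fun m => ‖F m‖) (s2 : Summable fun m => ‖G m‖) :
    (∑' m, F m) * (∑' m, G m) = ∑' m, ∑ kl ∈ Finset.HasAntidiagonal.antidiagonal m, F kl.1 * G kl.2 :=
  Summable.tsum_mul_tsum_eq_tsum_sum_antidiagonal s1.of_norm s2.of_norm
    (summable_mul_of_summable_norm s1 s2)

lemma ev_mul {a b : MvPowerSeries (Option (Fin n)) ℝ} {y : Option (Fin n) → ℝ}
    (s1 : Summable fun m => ‖coeff m a * mon m y‖) (s2 : Summable fun m => ‖coeff m b * mon m y‖) :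
    (∑' m, coeff m a * mon m y) * (∑' m, coeff m b * mon m y) = ∑' m, coeff m (a * b) * mon m y := by
  classical
  rw [tsum_mul_gen (fun m => coeff m a * mon m y) (fun m => coeff m b * mon m y) s1 s2]
  refine tsum_congr fun m => ?_
  rw [coeff_mul, Finset.sum_mul]
  refine Finset.sum_congr rfl fun p hp => ?_
  rw [← Finset.HasAntidiagonal.mem_antidiagonal.1 hp, mon_add]
  ring

lemma PS.mul {a b : MvPowerSeries (Option (Fin n)) ℝ} {f g : (Option (Fin n) → ℝ) → ℝ} (hf : PS a f)
    (hg : PS b g) : PS (a * b) (fun y => f y * g y) := by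
  obtain ⟨r, hr, h1, h2⟩ := hf
  obtain ⟨s, hs, h3, h4⟩ := hg
  have h1' := Nw_ne_top_mono (min_le_left r s) h1
  have h3' := Nw_ne_top_mono (min_le_right r s) h3
  refine ⟨min r s, lt_min hr hs, ne_top_of_le_ne_top (ENNReal.mul_ne_top h1' h3')
    (Nw_mul (geo (min r s)) (fun x y => (geo_add (min r s) x y).le) a b), ?_⟩
  intro y hy
  have hy' : ‖y‖ < r ∧ ‖y‖ < s := by
    rw [NNReal.coe_min] at hy; exact ⟨hy.trans_le (min_le_left _ _), hy.trans_le (min_le_right _ _)⟩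
  have s1 := summable_ev h1 hy'.1.le
  have s2 := summable_ev h3 hy'.2.le
  beta_reduce
  rw [h2 y hy'.1, h4 y hy'.2, ev_mul s1 s2]

lemma PS_monomial (k : Option (Fin n) →₀ ℕ) (c : ℝ) : PS (monomial k c) (fun y => c * mon k y) := by
  classical
  refine ⟨1, one_pos, ?_, fun y _ => ?_⟩
  · unfold Nw
    rw [tsum_eq_single k]
    · exact ENNReal.coe_ne_top
    · intro m hm
      rw [coeff_monomial_ne hm]; simp
  · rw [tsum_eq_single k]
    · rw [coeff_monomial_same]
    · intro m hm
      rw [coeff_monomial_ne hm]; simp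

lemma PS_zero : PS (0 : MvPowerSeries (Option (Fin n)) ℝ) (fun _ => 0) := by
  simpa using PS_monomial (n := n) 0 0

lemma PS_two : PS (2 : MvPowerSeries (Option (Fin n)) ℝ) (fun _ => 2) := by
  have h := PS_monomial (n := n) 0 1
  have h1 : (monomial (R := ℝ) (0 : Option (Fin n) →₀ ℕ)) 1 = 1 := rfl
  have := h.add h
  rw [h1, one_add_one_eq_two] at this
  convert this using 1
  funext y; rw [mon_zero]; norm_num

lemma PS_X : PS (X none : MvPowerSeries (Option (Fin n)) ℝ) (fun y => y none) := by
  have h := PS_monomial (n := n) (single none 1) 1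
  simp only [mon_single, one_mul] at h
  exact h

lemma PS_sum {κ : Type*} (s : Finset κ) {a : κ → MvPowerSeries (Option (Fin n)) ℝ} {f : κ → (Option (Fin n) → ℝ) → ℝ}
    (h : ∀ i, PS (a i) (f i)) : PS (∑ i ∈ s, a i) (fun y => ∑ i ∈ s, f i y) := by
  classical
  induction s using Finset.induction_on with
  | empty => simpa using PS_zero
  | insert i s hi ih =>
    simp only [Finset.sum_insert hi]
    exact (h i).add ih

/-- partial derivatives -/
noncomputable def pd (i : Option (Fin n)) (f : (Option (Fin n) → ℝ) → ℝ) (y : Option (Fin n) → ℝ) : ℝ :=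
  deriv (fun s => f (Function.update y i s)) (y i)

lemma pd_congr {f g : (Option (Fin n) → ℝ) → ℝ} (i : Option (Fin n)) {y : Option (Fin n) → ℝ}
    (h : f =ᶠ[nhds y] g) : pd i f y = pd i g y := by
  refine Filter.EventuallyEq.deriv_eq ?_
  have hc : Tendsto (fun s => Function.update y i s) (nhds (y i)) (nhds y) := by
    have : Continuous (fun s => Function.update y i s) := continuous_const.update i continuous_id
    simpa using this.tendsto (y i)
  exact hc.eventually h

lemma pd_congr' {f g : (Option (Fin n) → ℝ) → ℝ} (i : Option (Fin n)) {y : Option (Fin n) → ℝ}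
    (h : f =ᶠ[nhds y] g) : pd i f =ᶠ[nhds y] pd i g :=
  h.eventuallyEq_nhds.mono fun _ hz => pd_congr i hz

lemma mon_hasDerivAt (m : Option (Fin n) →₀ ℕ) (i : Option (Fin n)) (y : Option (Fin n) → ℝ) (s : ℝ) :
    HasDerivAt (fun s => mon m (Function.update y i s))
      (m i * mon (m - single i 1) (Function.update y i s)) s := by
  classical
  have e : ∀ (m : Option (Fin n) →₀ ℕ) s, mon m (Function.update y i s) = s ^ m i * ∏ j ∈ Finset.univ.erase i, y j ^ m j := by
    intro m s
    rw [mon, ← Finset.mul_prod_erase _ _ (Finset.mem_univ i)]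
    congr 1
    · simp
    · refine Finset.prod_congr rfl fun j hj => ?_
      rw [Function.update_of_ne (Finset.ne_of_mem_erase hj)]
  have e2 : ∏ j ∈ Finset.univ.erase i, y j ^ ((m - single i 1 : Option (Fin n) →₀ ℕ) j) = ∏ j ∈ Finset.univ.erase i, y j ^ m j := by
    refine Finset.prod_congr rfl fun j hj => ?_
    simp [Finsupp.single_apply, (Finset.ne_of_mem_erase hj).symm]
  simp only [e]
  rw [e2, ← mul_assoc]
  refine HasDerivAt.mul_const ?_ _
  simpa using hasDerivAt_pow (m i) s

lemma geo_single (r : ℝ≥0) (i : Option (Fin n)) : geo r (single i 1) = r := by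
  rcases i with _ | i
  · simp [geo, xd_none]
  · simp [geo, xd_some]

lemma le_deg (m : Option (Fin n) →₀ ℕ) (i : Option (Fin n)) : m i ≤ m none + xd m := by
  rcases i with _ | i
  · omega
  · have := le_xd m i; omega

lemma geo_half (r : ℝ≥0) (i : Option (Fin n)) (m : Option (Fin n) →₀ ℕ) :
    ((m i : ℝ≥0) + 1) * geo (r / 2) m * (r / 2) ≤ geo r (m + single i 1) := by
  have h1 : geo r (m + single i 1) = 2 ^ (m none + xd m + 1) * (geo (r / 2) m * (r / 2)) := by
    rw [geo_add, geo_single, geo, geo, div_pow, pow_succ]; field_simp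
  rw [h1, mul_assoc]
  gcongr
  have h2 : m i + 1 ≤ 2 ^ (m none + xd m + 1) :=
    (Nat.add_le_add_right (le_deg m i) 1).trans (Nat.lt_two_pow_self).le
  exact_mod_cast h2

lemma Nw_pderiv {r : ℝ≥0} (hr : 0 < r) (i : Option (Fin n)) (a : MvPowerSeries (Option (Fin n)) ℝ)
    (h : Nw (geo r) a ≠ ⊤) : Nw (geo (r / 2)) (pderiv ℝ i a) ≠ ⊤ := by
  have : Nw (geo (r / 2)) (pderiv ℝ i a) ≤ ((r / 2)⁻¹ : ℝ≥0) * Nw (geo r) a := by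
    have hinj : Function.Injective (fun m : Option (Fin n) →₀ ℕ => m + single i 1) := fun x y h => by simpa using h
    unfold Nw
    rw [← ENNReal.tsum_mul_left]
    refine le_trans (ENNReal.tsum_le_tsum fun m => ?_)
      (ENNReal.tsum_comp_le_tsum_of_injective hinj _)
    rw [← ENNReal.coe_mul]
    refine ENNReal.coe_le_coe.2 ?_
    rw [coeff_pderiv]
    have h1 : ‖coeff (m + single i 1) a * ((m i : ℝ) + 1)‖₊ = ‖coeff (m + single i 1) a‖₊ * ((m i : ℝ≥0) + 1) := by
      rw [nnnorm_mul]
      congr 1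
      ext; simp; positivity
    rw [h1]
    calc _ = (r / 2)⁻¹ * (‖coeff (m + single i 1) a‖₊ * (((m i : ℝ≥0) + 1) * geo (r / 2) m * (r / 2))) := by
          field_simp
      _ ≤ _ := by gcongr; exact geo_half r i m
  exact ne_top_of_le_ne_top (ENNReal.mul_ne_top ENNReal.coe_ne_top h) this

lemma PS.pd {a : MvPowerSeries (Option (Fin n)) ℝ} {f : (Option (Fin n) → ℝ) → ℝ} (i : Option (Fin n))
    (hf : PS a f) : PS (pderiv ℝ i a) (pd i f) := by
  classical
  obtain ⟨r, hr, h1, h2⟩ := hf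
  refine ⟨r / 2, by positivity, Nw_pderiv hr i a h1, ?_⟩
  have hr2 : ((r / 2 : ℝ≥0) : ℝ) < r := by push_cast; exact half_lt_self (by exact_mod_cast hr)
  intro y hy
  have hupd : ∀ s ∈ Metric.ball (0 : ℝ) (r / 2 : ℝ≥0), ‖Function.update y i s‖ < (r / 2 : ℝ≥0) := by
    intro s hs
    rw [pi_norm_lt_iff (by exact_mod_cast half_pos hr)]
    intro j
    by_cases hj : j = i
    · subst hj; simpa using hs
    · rw [Function.update_of_ne hj]; exact (norm_le_pi_norm y j).trans_lt hy
  have hyi : y i ∈ Metric.ball (0 : ℝ) (r / 2 : ℝ≥0) := by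
    simpa using (norm_le_pi_norm y i).trans_lt hy
  have hinj : Function.Injective (fun m : Option (Fin n) →₀ ℕ => m + single i 1) := fun x y h => by simpa using h
  set u : (Option (Fin n) →₀ ℕ) → ℝ := fun m => |coeff m a| * (m i * (geo (r / 2) (m - single i 1) : ℝ)) with hu
  have hz : ∀ m : Option (Fin n) →₀ ℕ, m ∉ Set.range (fun m : Option (Fin n) →₀ ℕ => m + single i 1) → m i = 0 := by
    intro m hm
    by_contra h0
    refine hm ⟨m - single i 1, tsub_add_cancel_of_le ?_⟩
    simpa using Nat.one_le_iff_ne_zero.2 h0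
  have hus : Summable u := by
    rw [← hinj.summable_iff]
    · have := Nw_summable (Nw_pderiv hr i a h1)
      refine this.congr fun m => ?_
      simp only [hu, Function.comp, coeff_pderiv, abs_mul, add_tsub_cancel_right]
      rw [abs_of_nonneg (by positivity : (0 : ℝ) ≤ (m i : ℝ) + 1)]
      simp [mul_assoc]
    · intro m hm
      simp [hu, hz m hm]
  have key := hasDerivAt_tsum_of_isPreconnected (g := fun m s => coeff m a * mon m (Function.update y i s))
    (g' := fun m s => coeff m a * (m i * mon (m - single i 1) (Function.update y i s)))
    (t := Metric.ball (0 : ℝ) (r / 2 : ℝ≥0)) hus Metric.isOpen_ball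
    (convex_ball _ _).isPreconnected
    (fun m s _ => (mon_hasDerivAt m i y s).const_mul _)
    (fun m s hs => by
      rw [norm_mul, norm_mul, hu]
      simp only [Real.norm_eq_abs, Nat.abs_cast]
      gcongr
      exact abs_mon_le (hupd s hs).le _) hyi
    (by
      have := (summable_ev h1 (y := Function.update y i (y i)) ((hupd _ hyi).trans hr2).le).of_norm
      exact this) hyi
  have e1 : Fuchs.pd i f y = ∑' m, coeff m a * (m i * mon (m - single i 1) y) := by
    have := key.deriv
    rw [Function.update_eq_self] at this
    rw [← this]
    refine Filter.EventuallyEq.deriv_eq ?_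
    filter_upwards [Metric.isOpen_ball.mem_nhds hyi] with s hs
    exact h2 _ ((hupd s hs).trans hr2)
  rw [e1, ← hinj.tsum_eq]
  · refine tsum_congr fun m => ?_
    rw [coeff_pderiv, add_tsub_cancel_right]
    simp [mul_assoc]
  · intro m hm
    by_contra h
    simp [hz m h] at hm

lemma PS.coeff_zero {a : MvPowerSeries (Option (Fin n)) ℝ} {f : (Option (Fin n) → ℝ) → ℝ}
    (h : PS a f) : f 0 = coeff 0 a := by
  obtain ⟨r, hr, -, h2⟩ := h
  rw [h2 0 (by simpa using hr), tsum_eq_single 0]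
  · rw [mon_zero, mul_one]
  · intro m hm
    obtain ⟨i, hi⟩ := Finsupp.ne_iff.1 hm
    have : mon m 0 = 0 := Finset.prod_eq_zero (Finset.mem_univ i) (by simpa using hi)
    rw [this, mul_zero]

lemma PS.coeff_eq : ∀ (k : ℕ) (m : Option (Fin n) →₀ ℕ), m none + xd m = k →
    ∀ {a b : MvPowerSeries (Option (Fin n)) ℝ} {f g : (Option (Fin n) → ℝ) → ℝ}
    (_ : PS a f) (_ : PS b g) (_ : f =ᶠ[nhds 0] g), coeff m a = coeff m b := by
  intro k
  induction k with
  | zero =>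
    intro m hm a b f g h1 h2 h3
    have : m = 0 := by
      ext i
      have := le_deg m i
      simp; omega
    rw [this, ← h1.coeff_zero, ← h2.coeff_zero, h3.eq_of_nhds]
  | succ k ih =>
    intro m hm a b f g h1 h2 h3
    have hne : m ≠ 0 := by rintro rfl; simp [xd] at hm
    obtain ⟨i, hi⟩ := Finsupp.ne_iff.1 hne
    have e : m = (m - single i 1) + single i 1 := (tsub_add_cancel_of_le (by
      simpa using Nat.one_le_iff_ne_zero.2 hi)).symm
    generalize m - single i 1 = m' at e
    subst e
    have hd : m' none + xd m' = k := by
      rw [xd_add, Finsupp.add_apply] at hm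
      rcases i with _ | i
      · rw [xd_none] at hm; simp at hm; omega
      · rw [xd_some] at hm; simp at hm; omega
    have := ih m' hd (h1.pd i) (h2.pd i) (pd_congr' i h3)
    rw [coeff_pderiv, coeff_pderiv] at this
    exact mul_right_cancel₀ (by positivity) this

lemma PS.unique {a b : MvPowerSeries (Option (Fin n)) ℝ} {f g : (Option (Fin n) → ℝ) → ℝ}
    (h1 : PS a f) (h2 : PS b g) (h : f =ᶠ[nhds 0] g) : a = b := by
  ext m
  exact PS.coeff_eq _ m rfl h1 h2 h

lemma PS.eventuallyEq {a : MvPowerSeries (Option (Fin n)) ℝ} {f g : (Option (Fin n) → ℝ) → ℝ}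
    (h1 : PS a f) (h2 : PS a g) : f =ᶠ[nhds 0] g := by
  obtain ⟨r, hr, -, h3⟩ := h1
  obtain ⟨s, hs, -, h4⟩ := h2
  filter_upwards [ball_ev hr, ball_ev hs] with y hy hy'
  rw [h3 y hy, h4 y hy']

/-- restriction to `t = 0` -/
noncomputable def restr (a : MvPowerSeries (Option (Fin n)) ℝ) : MvPowerSeries (Option (Fin n)) ℝ :=
  fun m => if m none = 0 then coeff m a else 0

lemma coeff_restr (a : MvPowerSeries (Option (Fin n)) ℝ) (m : Option (Fin n) →₀ ℕ) :
    coeff m (restr a) = if m none = 0 then coeff m a else 0 := rfl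

lemma PS.restr {a : MvPowerSeries (Option (Fin n)) ℝ} {f : (Option (Fin n) → ℝ) → ℝ}
    (h : PS a f) : PS (restr a) (fun y => f (Function.update y none 0)) := by
  classical
  obtain ⟨r, hr, h1, h2⟩ := h
  refine ⟨r, hr, ne_top_of_le_ne_top h1 (ENNReal.tsum_le_tsum fun m => ENNReal.coe_le_coe.2 ?_), ?_⟩
  · gcongr
    rw [coeff_restr]
    split_ifs <;> simp
  · intro y hy
    have : ‖Function.update y none 0‖ < r := by
      rw [pi_norm_lt_iff (by exact_mod_cast hr)]
      intro j
      by_cases hj : j = none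
      · subst hj; simpa using hr
      · rw [Function.update_of_ne hj]; exact (norm_le_pi_norm y j).trans_lt hy
    beta_reduce
    rw [h2 _ this]
    refine tsum_congr fun m => ?_
    rw [coeff_restr]
    split_ifs with h0
    · congr 1
      refine Finset.prod_congr rfl fun j _ => ?_
      by_cases hj : j = none
      · subst hj; simp [h0]
      · rw [Function.update_of_ne hj]
    · rw [mon, Finset.prod_eq_zero (Finset.mem_univ none)]
      · simp
      · simp [h0]

end germs
end Fuchs

namespace Fuchs
open MvPowerSeries Finsupp
open scoped NNReal ENNReal

section words
variable {n : ℕ}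

/-- words -/
abbrev Wd (n : ℕ) := Σ N : ℕ, (Fin N → Option (Fin n))

/-- the type of a word -/
noncomputable def T (w : Wd n) : Option (Fin n) →₀ ℕ := ∑ k, single (w.2 k) 1

lemma mon_T (w : Wd n) (y : Option (Fin n) → ℝ) : mon (T w) y = ∏ k, y (w.2 k) := by
  classical
  have : ∀ s : Finset (Fin w.1), mon (∑ k ∈ s, single (w.2 k) 1) y = ∏ k ∈ s, y (w.2 k) := by
    intro s
    induction s using Finset.induction_on with
    | empty => simp [mon_zero]
    | insert i s hi ih => rw [Finset.sum_insert hi, Finset.prod_insert hi, mon_add, ih, mon_single]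
  exact this _

lemma geo_T (w : Wd n) (r : ℝ≥0) : geo r (T w) = r ^ w.1 := by
  have h : (geo r (T w) : ℝ) = mon (T w) (fun _ => (r : ℝ)) := by
    rw [geo_eq, mon]; push_cast; rfl
  rw [mon_T] at h
  have : (geo r (T w) : ℝ) = ((r ^ w.1 : ℝ≥0) : ℝ) := by rw [h]; simp
  exact_mod_cast this

lemma T_surj : Function.Surjective (T (n := n)) := by
  intro m
  induction m using Finsupp.induction_linear with
  | zero => exact ⟨⟨0, Fin.elim0⟩, by simp [T]⟩
  | add f g hf hg =>
    obtain ⟨⟨N, w⟩, rfl⟩ := hf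
    obtain ⟨⟨N', w'⟩, rfl⟩ := hg
    refine ⟨⟨N + N', Fin.append w w'⟩, ?_⟩
    simp [T, Fin.sum_univ_add]
  | single i k =>
    exact ⟨⟨k, fun _ => i⟩, by simp [T]⟩

lemma PS_of_analytic {f : (Option (Fin n) → ℝ) → ℝ} (hf : AnalyticAt ℝ f 0) : ∃ a, PS a f := by
  classical
  obtain ⟨p, R, hp⟩ := hf
  obtain ⟨R', hR'0, hR'⟩ := ENNReal.lt_iff_exists_nnreal_btwn.1 hp.r_pos
  have hR'pos : 0 < R' := by exact_mod_cast hR'0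
  set ρ : ℝ≥0 := R' / (n + 1) with hρ
  have hρpos : 0 < ρ := by positivity
  have hρle : ρ ≤ R' := div_le_self (by positivity) (by simp)
  have hρR : (n + 1 : ℝ≥0) * ρ = R' := by rw [hρ]; field_simp
  have hsum := p.summable_norm_mul_pow (hR'.trans_le hp.r_le)
  set c : Wd n → ℝ := fun w => p w.1 (fun k => Pi.single (w.2 k) 1) with hc
  have hcb : ∀ w : Wd n, ‖c w‖ ≤ ‖p w.1‖ := by
    intro w
    refine ((p w.1).le_opNorm _).trans ?_
    refine mul_le_of_le_one_right (norm_nonneg _) (Finset.prod_le_one (fun _ _ => norm_nonneg _) fun k _ => ?_)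
    simp [Pi.norm_single]
  have hcs : Summable fun w : Wd n => ‖c w‖ * (ρ : ℝ) ^ w.1 := by
    rw [summable_sigma_of_nonneg (fun w => by positivity)]
    refine ⟨fun N => (hasSum_fintype _).summable, ?_⟩
    refine Summable.of_nonneg_of_le (fun N => tsum_nonneg fun w => by positivity) (fun N => ?_) hsum
    rw [tsum_fintype]
    calc _ ≤ ∑ w : Fin N → Option (Fin n), ‖p N‖ * (ρ : ℝ) ^ N := by
          refine Finset.sum_le_sum fun w _ => ?_
          gcongr; exact hcb ⟨N, w⟩
      _ = ‖p N‖ * (R' : ℝ) ^ N := by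
          rw [← hρR]; simp [mul_pow]; ring
  set a : MvPowerSeries (Option (Fin n)) ℝ := fun m => ∑' w : T ⁻¹' {m}, c w with ha
  have hca : ∀ m, coeff m a = ∑' w : T ⁻¹' {m}, c w := fun m => rfl
  refine ⟨a, ρ, hρpos, ?_, ?_⟩
  · have h1 : Nw (geo ρ) a ≤ ∑' w : Wd n, ‖c w‖ₑ * ((ρ ^ w.1 : ℝ≥0) : ℝ≥0∞) := by
      rw [← ENNReal.tsum_fiberwise _ T]
      refine ENNReal.tsum_le_tsum fun m => ?_
      calc ((‖coeff m a‖₊ * geo ρ m : ℝ≥0) : ℝ≥0∞) = ‖∑' w : T ⁻¹' {m}, c w‖ₑ * (geo ρ m : ℝ≥0∞) := by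
            rw [← hca]; push_cast; rfl
        _ ≤ (∑' w : T ⁻¹' {m}, ‖c w‖ₑ) * (geo ρ m : ℝ≥0∞) := by
            gcongr; exact enorm_tsum_le_tsum_enorm
        _ = ∑' w : T ⁻¹' {m}, ‖c w‖ₑ * ((ρ ^ w.1.1 : ℝ≥0) : ℝ≥0∞) := by
            rw [← ENNReal.tsum_mul_right]
            refine tsum_congr fun w => ?_
            rw [← geo_T, show T w.1 = m from w.2]
        _ ≤ _ := le_rfl
    refine ne_top_of_le_ne_top ?_ h1
    have h2 : Summable fun w : Wd n => ‖c w‖₊ * ρ ^ w.1 := by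
      rw [← NNReal.summable_coe]; simpa using hcs
    have h3 := ENNReal.tsum_coe_ne_top_iff_summable.2 h2
    simpa [enorm] using h3
  · intro y hy
    have hyR : ‖y‖ < R' := hy.trans_le (by exact_mod_cast hρle)
    have hs : HasSum (fun N => p N fun _ => y) (f y) := by
      have := hp.hasSum (y := y) (by
        rw [Metric.mem_eball, edist_zero_right]
        refine lt_trans ?_ hR'
        rw [enorm_eq_nnnorm]; exact_mod_cast hyR)
      simpa using this
    have hpe : ∀ N, (p N fun _ => y) = ∑ w : Fin N → Option (Fin n), c ⟨N, w⟩ * mon (T ⟨N, w⟩) y := by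
      intro N
      have e : (fun _ : Fin N => y) = fun _ : Fin N => ∑ i, y i • (Pi.single i 1 : Option (Fin n) → ℝ) := by
        funext k
        funext j
        simp [Finset.sum_apply, Pi.single_apply]
      rw [e]
      have := (p N).toMultilinearMap.map_sum (g := fun _ i => y i • (Pi.single i 1 : Option (Fin n) → ℝ))
      refine this.trans (Finset.sum_congr rfl fun w _ => ?_)
      have h2 := (p N).toMultilinearMap.map_smul_univ (fun k => y (w k)) (fun k => (Pi.single (w k) 1 : Option (Fin n) → ℝ))
      refine h2.trans ?_
      rw [mon_T, smul_eq_mul, mul_comm]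
      rfl
    have hws : Summable fun w : Wd n => c w * mon (T w) y := by
      refine Summable.of_norm (Summable.of_nonneg_of_le (fun _ => norm_nonneg _) (fun w => ?_) hcs)
      rw [norm_mul]
      have := abs_mon_le hy.le (T w)
      rw [geo_T] at this
      push_cast at this
      exact mul_le_mul_of_nonneg_left this (norm_nonneg _)
    have hf : HasSum (fun w : Wd n => c w * mon (T w) y) (f y) := by
      have h4 := hws.hasSum
      have h5 := h4.sigma (fun N => hasSum_fintype _)
      have h6 : HasSum (fun N => p N fun _ => y) (∑' w : Wd n, c w * mon (T w) y) := by
        simp only [hpe]; exact h5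
      rw [hs.unique h6]; exact h4
    have h7 := hf.tsum_fiberwise T
    rw [← h7.tsum_eq]
    refine tsum_congr fun m => ?_
    rw [hca, ← tsum_mul_right]
    refine tsum_congr fun w => ?_
    rw [show T w.1 = m from w.2]

lemma PS.analytic {a : MvPowerSeries (Option (Fin n)) ℝ} {f : (Option (Fin n) → ℝ) → ℝ} (h : PS a f) :
    AnalyticAt ℝ f 0 := by
  classical
  obtain ⟨r, hr, h1, h2⟩ := h
  choose s hs using T_surj (n := n)
  have hinj : Function.Injective s := fun x y h => by rw [← hs x, ← hs y, h]
  set b : Wd n → ℝ := fun w => if s (T w) = w then coeff (T w) a else 0 with hb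
  have hbs : ∀ m, b (s m) = coeff m a := fun m => by simp [hb, hs]
  have hb0 : ∀ w, w ∉ Set.range s → b w = 0 := fun w hw => by
    simp only [hb]; rw [if_neg]; intro h; exact hw ⟨_, h⟩
  set M : (N : ℕ) → (Fin N → Option (Fin n)) → ContinuousMultilinearMap ℝ (fun _ : Fin N => Option (Fin n) → ℝ) ℝ :=
    fun N w => (ContinuousMultilinearMap.mkPiAlgebra ℝ (Fin N) ℝ).compContinuousLinearMap
      (fun k => ContinuousLinearMap.proj (w k)) with hM
  have hMn : ∀ N w, ‖M N w‖ ≤ 1 := by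
    intro N w
    refine ContinuousMultilinearMap.opNorm_le_bound zero_le_one fun x => ?_
    simp only [hM, ContinuousMultilinearMap.compContinuousLinearMap_apply, ContinuousMultilinearMap.mkPiAlgebra_apply,
      ContinuousLinearMap.proj_apply, one_mul, norm_prod]
    exact Finset.prod_le_prod (fun _ _ => norm_nonneg _) fun k _ => norm_le_pi_norm _ _
  set p : FormalMultilinearSeries ℝ (Option (Fin n) → ℝ) ℝ := fun N => ∑ w, b ⟨N, w⟩ • M N w with hp
  have hsum : Summable fun w : Wd n => |b w| * (r : ℝ) ^ w.1 := by
    rw [← hinj.summable_iff]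
    · refine (Nw_summable h1).congr fun m => ?_
      simp only [Function.comp, hbs]
      rw [← hs m, geo_T, hs]; push_cast; rfl
    · intro w hw; rw [hb0 w hw]; simp
  have hrad : (r : ℝ≥0∞) ≤ p.radius := by
    refine p.le_radius_of_summable ?_
    refine Summable.of_nonneg_of_le (fun _ => by positivity) (fun N => ?_)
      ((summable_sigma_of_nonneg (fun w => by positivity)).1 hsum).2
    rw [tsum_fintype]
    show ‖p N‖ * (r : ℝ) ^ N ≤ ∑ w : Fin N → Option (Fin n), |b ⟨N, w⟩| * (r : ℝ) ^ N
    rw [← Finset.sum_mul]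
    refine mul_le_mul_of_nonneg_right ?_ (by positivity)
    refine (norm_sum_le _ _).trans (Finset.sum_le_sum fun w _ => ?_)
    rw [norm_smul]
    exact mul_le_of_le_one_right (norm_nonneg _) (hMn N w)
  refine ⟨p, r, hrad, by exact_mod_cast hr, ?_⟩
  intro y hy
  rw [Metric.mem_eball, edist_zero_right, enorm_eq_nnnorm] at hy
  have hy' : ‖y‖ < r := by exact_mod_cast hy
  rw [zero_add, h2 y hy']
  have h4 := (summable_ev h1 hy'.le).of_norm.hasSum
  have h5 : HasSum (fun w : Wd n => b w * mon (T w) y) (∑' m, coeff m a * mon m y) := by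
    rw [← hinj.hasSum_iff]
    · have e : (fun w : Wd n => b w * mon (T w) y) ∘ s = fun m => coeff m a * mon m y := by
        funext m
        simp only [Function.comp, hbs, hs]
      rw [e]; exact h4
    · intro w hw; rw [hb0 w hw, zero_mul]
  have h6 := h5.sigma (fun N => hasSum_fintype _)
  have e : (fun N => p N fun _ => y) = fun N => ∑ w : Fin N → Option (Fin n), b ⟨N, w⟩ * mon (T ⟨N, w⟩) y := by
    funext N
    have e1 : (p N fun _ => y) = (∑ w, b ⟨N, w⟩ • M N w) fun _ => y := rfl
    rw [e1]
    simp [hM, mon_T]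
  rw [e]; exact h6

end words
end Fuchs

namespace Fuchs
open MvPowerSeries Finsupp
open scoped NNReal ENNReal

section localtheory
variable {n : ℕ}

/-- evaluation of coefficients -/
def Co.ev {Y : Type*} (c : Co (Y → ℝ) n) (y : Y) : Co ℝ n :=
  ⟨c.α y, c.β y, c.p0 y, c.r0 y, c.q0 y, fun i => c.p i y, fun i => c.r i y, fun i => c.q1 i y,
    fun i j => c.q2 i j y, fun i j => c.s i j y⟩

/-- coefficient series represent coefficient functions -/
structure CoPS (a : Co (MvPowerSeries (Option (Fin n)) ℝ) n) (c : Co ((Option (Fin n) → ℝ) → ℝ) n) : Prop where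
  α : PS a.α c.α
  β : PS a.β c.β
  p0 : PS a.p0 c.p0
  r0 : PS a.r0 c.r0
  q0 : PS a.q0 c.q0
  p : ∀ i, PS (a.p i) (c.p i)
  r : ∀ i, PS (a.r i) (c.r i)
  q1 : ∀ i, PS (a.q1 i) (c.q1 i)
  q2 : ∀ i j, PS (a.q2 i j) (c.q2 i j)
  s : ∀ i j, PS (a.s i j) (c.s i j)

/-- right-hand side on functions -/
noncomputable def rhsFn (c : Co ((Option (Fin n) → ℝ) → ℝ) n) (f : (Option (Fin n) → ℝ) → ℝ)
    (y : Option (Fin n) → ℝ) : ℝ :=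
  rhs (c.ev y) (f y) (y none * pd none f y) (y none * pd none f y * pd none f y)
    (fun i => pd (some i) f y) (fun i => y none * pd (some i) (pd none f) y)
    (fun i j => pd (some i) (pd (some j) f) y)

/-- left-hand side on functions -/
noncomputable def lhsFn (f : (Option (Fin n) → ℝ) → ℝ) (y : Option (Fin n) → ℝ) : ℝ :=
  y none * pd none (pd none f) y + 2 * pd none f y

lemma PS_lhs {a : MvPowerSeries (Option (Fin n)) ℝ} {f : (Option (Fin n) → ℝ) → ℝ} (h : PS a f) :
    PS (lhsPS a) (lhsFn f) :=
  (PS_X.mul ((h.pd none).pd none)).add (PS_two.mul (h.pd none))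

lemma PS_rhs {c : Co (MvPowerSeries (Option (Fin n)) ℝ) n} {cf : Co ((Option (Fin n) → ℝ) → ℝ) n}
    (hc : CoPS c cf)
    {a : MvPowerSeries (Option (Fin n)) ℝ} {f : (Option (Fin n) → ℝ) → ℝ} (h : PS a f) :
    PS (rhsPS c a) (rhsFn cf f) := by
  have ht := PS_X.mul (h.pd none)
  refine PS.add (PS.add (PS.add (PS.add (PS.add hc.α ?_) ?_) ?_) ?_) ?_
  · exact (hc.p0.mul ht).add (PS_sum _ fun i => (hc.p i).mul (PS_X.mul ((h.pd none).pd (some i))))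
  · exact ((hc.q0.mul h).add (PS_sum _ fun i => (hc.q1 i).mul (h.pd (some i)))).add
      (PS_sum _ fun i => PS_sum _ fun j => (hc.q2 i j).mul ((h.pd (some j)).pd (some i)))
  · exact hc.β.mul (ht.mul (h.pd none))
  · exact ((hc.r0.mul h).add (PS_sum _ fun i => (hc.r i).mul (h.pd (some i)))).mul ht
  · exact PS_sum _ fun i => PS_sum _ fun j => ((hc.s i j).mul (h.pd (some i))).mul (h.pd (some j))

/-- the chart -/
def phi (x0 : Fin n → ℝ) (y : Option (Fin n) → ℝ) : ℝ × (Fin n → ℝ) := (y none, fun i => x0 i + y (some i))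

/-- its inverse -/
def psi (x0 : Fin n → ℝ) (w : ℝ × (Fin n → ℝ)) : Option (Fin n) → ℝ := fun o => o.elim w.1 (fun i => w.2 i - x0 i)

lemma phi_psi (x0 : Fin n → ℝ) (w : ℝ × (Fin n → ℝ)) : phi x0 (psi x0 w) = w := by
  ext <;> simp [phi, psi]

lemma psi_phi (x0 : Fin n → ℝ) (y : Option (Fin n) → ℝ) : psi x0 (phi x0 y) = y := by
  funext o; rcases o with _ | i <;> simp [phi, psi]

lemma phi_zero (x0 : Fin n → ℝ) : phi x0 0 = (0, x0) := by
  ext <;> simp [phi]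

lemma psi_zero (x0 : Fin n → ℝ) : psi x0 (0, x0) = 0 := by rw [← phi_zero, psi_phi]

lemma phi_analytic (x0 : Fin n → ℝ) (y : Option (Fin n) → ℝ) : AnalyticAt ℝ (phi x0) y := by
  refine AnalyticAt.prod (ContinuousLinearMap.analyticAt (ContinuousLinearMap.proj (R := ℝ) none) y) ?_
  refine AnalyticAt.pi fun i => ?_
  exact analyticAt_const.add (ContinuousLinearMap.analyticAt (ContinuousLinearMap.proj (R := ℝ) (some i)) y)

lemma psi_analytic (x0 : Fin n → ℝ) (w : ℝ × (Fin n → ℝ)) : AnalyticAt ℝ (psi x0) w := by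
  refine AnalyticAt.pi fun o => ?_
  rcases o with _ | i
  · exact analyticAt_fst
  · exact (ContinuousLinearMap.analyticAt ((ContinuousLinearMap.proj (R := ℝ) i).comp
      (ContinuousLinearMap.snd ℝ ℝ (Fin n → ℝ))) w).sub analyticAt_const

lemma phi_tendsto (x0 : Fin n → ℝ) : Tendsto (phi x0) (nhds 0) (nhds (0, x0)) := by
  have := (phi_analytic x0 0).continuousAt.tendsto
  rwa [phi_zero] at this

lemma psi_tendsto (x0 : Fin n → ℝ) : Tendsto (psi x0) (nhds (0, x0)) (nhds 0) := by
  have := (psi_analytic x0 (0, x0)).continuousAt.tendsto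
  rwa [psi_zero] at this

lemma ev_iff (x0 : Fin n → ℝ) (P : ℝ × (Fin n → ℝ) → Prop) :
    (∀ᶠ w in nhds (0, x0), P w) ↔ ∀ᶠ y in nhds 0, P (phi x0 y) := by
  constructor
  · exact fun h => (phi_tendsto x0).eventually h
  · intro h
    filter_upwards [(psi_tendsto x0).eventually h] with w hw
    rwa [phi_psi] at hw

/-- translation to the origin -/
def tl (x0 : Fin n → ℝ) (v : ℝ → (Fin n → ℝ) → ℝ) (y : Option (Fin n) → ℝ) : ℝ :=
  v (phi x0 y).1 (phi x0 y).2

lemma tl_ptd (x0 : Fin n → ℝ) (v : ℝ → (Fin n → ℝ) → ℝ) : tl x0 (ptd v) = pd none (tl x0 v) := by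
  funext y
  simp [tl, ptd, pd, phi]

lemma tl_pxd (x0 : Fin n → ℝ) (i : Fin n) (v : ℝ → (Fin n → ℝ) → ℝ) : tl x0 (pxd i v) = pd (some i) (tl x0 v) := by
  funext y
  have h := deriv_comp_const_add (f := fun z => v (y none) (Function.update (fun j => x0 j + y (some j)) i z)) (x0 i) (y (some i))
  refine h.symm.trans ?_
  unfold pd
  congr 1
  funext s
  simp only [tl, phi]
  congr 1
  funext j
  by_cases hj : j = i
  · subst hj; simp
  · rw [Function.update_of_ne hj, Function.update_of_ne (by simpa using hj)]

lemma tl_analytic {x0 : Fin n → ℝ} {v : ℝ → (Fin n → ℝ) → ℝ}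
    (h : AnalyticAt ℝ (fun w : ℝ × (Fin n → ℝ) => v w.1 w.2) (0, x0)) : AnalyticAt ℝ (tl x0 v) 0 := by
  rw [← phi_zero] at h
  exact h.comp (phi_analytic x0 0)

/-- translated coefficients -/
def Co.tl (x0 : Fin n → ℝ) (c : Co (ℝ → (Fin n → ℝ) → ℝ) n) : Co ((Option (Fin n) → ℝ) → ℝ) n :=
  ⟨Fuchs.tl x0 c.α, Fuchs.tl x0 c.β, Fuchs.tl x0 c.p0, Fuchs.tl x0 c.r0, Fuchs.tl x0 c.q0,
   fun i => Fuchs.tl x0 (c.p i), fun i => Fuchs.tl x0 (c.r i), fun i => Fuchs.tl x0 (c.q1 i),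
   fun i j => Fuchs.tl x0 (c.q2 i j), fun i j => Fuchs.tl x0 (c.s i j)⟩

/-- the equation on a set -/
def Sol (c : Co (ℝ → (Fin n → ℝ) → ℝ) n) (v : ℝ → (Fin n → ℝ) → ℝ) (S : Set (ℝ × (Fin n → ℝ))) : Prop :=
  SolvesFuchs c.α c.β c.p0 c.r0 c.q0 c.p c.r c.q1 c.q2 c.s v S

lemma sol_iff (c : Co (ℝ → (Fin n → ℝ) → ℝ) n) (v : ℝ → (Fin n → ℝ) → ℝ) (x0 : Fin n → ℝ)
    (y : Option (Fin n) → ℝ) :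
    Sol c v {phi x0 y} ↔ lhsFn (tl x0 v) y = rhsFn (c.tl x0) (tl x0 v) y := by
  have e : Sol c v {phi x0 y} ↔ _ = _ :=
    ⟨fun h => h (phi x0 y).1 (phi x0 y).2 rfl, fun h t x hx => by
      obtain ⟨rfl, rfl⟩ : t = (phi x0 y).1 ∧ x = (phi x0 y).2 := by
        rw [← show (t, x) = phi x0 y from hx]; exact ⟨rfl, rfl⟩
      exact h⟩
  rw [e, lhsFn, rhsFn, rhs, Co.ev]
  simp only [← tl_ptd, ← tl_pxd]
  simp only [Co.tl, tl]
  have e2 : y none = (phi x0 y).1 := rfl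
  rw [e2]
  generalize phi x0 y = w
  refine Eq.congr rfl ?_
  have e3 : w.1 * (c.p0 w.1 w.2 * ptd v w.1 w.2 + ∑ i, c.p i w.1 w.2 * pxd i (ptd v) w.1 w.2)
    = c.p0 w.1 w.2 * (w.1 * ptd v w.1 w.2) + ∑ i, c.p i w.1 w.2 * (w.1 * pxd i (ptd v) w.1 w.2) := by
    rw [mul_add, Finset.mul_sum]
    congr 1
    · ring
    · exact Finset.sum_congr rfl fun i _ => by ring
  rw [e3]
  ring

/-- analyticity of all coefficients -/
structure Co.An (c : Co (ℝ → (Fin n → ℝ) → ℝ) n) (w : ℝ × (Fin n → ℝ)) : Prop where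
  α : AnalyticAt ℝ (fun w : ℝ × (Fin n → ℝ) => c.α w.1 w.2) w
  β : AnalyticAt ℝ (fun w : ℝ × (Fin n → ℝ) => c.β w.1 w.2) w
  p0 : AnalyticAt ℝ (fun w : ℝ × (Fin n → ℝ) => c.p0 w.1 w.2) w
  r0 : AnalyticAt ℝ (fun w : ℝ × (Fin n → ℝ) => c.r0 w.1 w.2) w
  q0 : AnalyticAt ℝ (fun w : ℝ × (Fin n → ℝ) => c.q0 w.1 w.2) w
  p : ∀ i, AnalyticAt ℝ (fun w : ℝ × (Fin n → ℝ) => c.p i w.1 w.2) w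
  r : ∀ i, AnalyticAt ℝ (fun w : ℝ × (Fin n → ℝ) => c.r i w.1 w.2) w
  q1 : ∀ i, AnalyticAt ℝ (fun w : ℝ × (Fin n → ℝ) => c.q1 i w.1 w.2) w
  q2 : ∀ i j, AnalyticAt ℝ (fun w : ℝ × (Fin n → ℝ) => c.q2 i j w.1 w.2) w
  s : ∀ i j, AnalyticAt ℝ (fun w : ℝ × (Fin n → ℝ) => c.s i j w.1 w.2) w

lemma Co.An.exists_PS {c : Co (ℝ → (Fin n → ℝ) → ℝ) n} {x0 : Fin n → ℝ} (h : c.An (0, x0)) :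
    ∃ a, CoPS a (c.tl x0) := by
  have P : ∀ {v : ℝ → (Fin n → ℝ) → ℝ}, AnalyticAt ℝ (fun w : ℝ × (Fin n → ℝ) => v w.1 w.2) (0, x0) →
    ∃ a, PS a (Fuchs.tl x0 v) := fun h => PS_of_analytic (tl_analytic h)
  obtain ⟨a1, h1⟩ := P h.α
  obtain ⟨a2, h2⟩ := P h.β
  obtain ⟨a3, h3⟩ := P h.p0
  obtain ⟨a4, h4⟩ := P h.r0
  obtain ⟨a5, h5⟩ := P h.q0
  choose a6 h6 using fun i => P (h.p i)
  choose a7 h7 using fun i => P (h.r i)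
  choose a8 h8 using fun i => P (h.q1 i)
  choose a9 h9 using fun i j => P (h.q2 i j)
  choose a10 h10 using fun i j => P (h.s i j)
  exact ⟨⟨a1, a2, a3, a4, a5, a6, a7, a8, a9, a10⟩, ⟨h1, h2, h3, h4, h5, h6, h7, h8, h9, h10⟩⟩

lemma local_unique {c : Co (ℝ → (Fin n → ℝ) → ℝ) n} {x0 : Fin n → ℝ} (hc : c.An (0, x0))
    {v v' : ℝ → (Fin n → ℝ) → ℝ}
    (hv : AnalyticAt ℝ (fun w : ℝ × (Fin n → ℝ) => v w.1 w.2) (0, x0))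
    (hv' : AnalyticAt ℝ (fun w : ℝ × (Fin n → ℝ) => v' w.1 w.2) (0, x0))
    (h0 : ∀ᶠ x in nhds x0, v 0 x = v' 0 x)
    (hs : ∀ᶠ w in nhds (0, x0), Sol c v {w}) (hs' : ∀ᶠ w in nhds (0, x0), Sol c v' {w}) :
    ∀ᶠ w : ℝ × (Fin n → ℝ) in nhds (0, x0), v w.1 w.2 = v' w.1 w.2 := by
  obtain ⟨ca, hca⟩ := hc.exists_PS
  obtain ⟨a, ha⟩ := PS_of_analytic (tl_analytic hv)
  obtain ⟨a', ha'⟩ := PS_of_analytic (tl_analytic hv')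
  have hr : restr a = restr a' := by
    refine ha.restr.unique ha'.restr ?_
    have ht : Tendsto (fun y => (phi x0 y).2) (nhds 0) (nhds x0) :=
      (continuous_snd.tendsto ((0 : ℝ), x0)).comp (phi_tendsto x0)
    filter_upwards [ht.eventually h0] with y hy
    simpa [tl, phi] using hy
  rw [ev_iff x0] at hs hs' ⊢
  simp only [sol_iff] at hs hs'
  have e := (PS_lhs ha).unique (PS_rhs hca ha) hs
  have e' := (PS_lhs ha').unique (PS_rhs hca ha') hs'
  have : a = a' := formal_unique ca (restr a) a a' (fun m hm => by rw [coeff_restr, if_neg hm])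
    (fun m hm => by rw [coeff_restr, if_pos hm]) (fun m hm => by rw [hr, coeff_restr, if_pos hm]) e e'
  subst this
  exact ha.eventuallyEq ha'

lemma PS.ev_r {a : MvPowerSeries (Option (Fin n)) ℝ} {f : (Option (Fin n) → ℝ) → ℝ} (h : PS a f) :
    ∀ᶠ r in nhdsWithin (0 : ℝ≥0) (Set.Ioi 0), Nw (geo r) a ≠ ⊤ := by
  obtain ⟨r, hr, h1, -⟩ := h
  filter_upwards [nhdsWithin_le_nhds (Iic_mem_nhds hr)] with s hs
  exact Nw_ne_top_mono hs h1

lemma ev_M {a : MvPowerSeries (Option (Fin n)) ℝ} {r : ℝ≥0} (h : Nw (geo r) a ≠ ⊤) :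
    ∀ᶠ M : ℝ≥0 in atTop, Nw (geo r) a ≤ M := by
  filter_upwards [eventually_ge_atTop (Nw (geo r) a).toNNReal] with M hM
  rw [← ENNReal.coe_toNNReal h]
  exact_mod_cast hM

lemma CoPS.bdd {a : Co (MvPowerSeries (Option (Fin n)) ℝ) n} {c : Co ((Option (Fin n) → ℝ) → ℝ) n}
    (h : CoPS a c) : ∀ᶠ r in nhdsWithin (0 : ℝ≥0) (Set.Ioi 0), ∀ᶠ M : ℝ≥0 in atTop, a.Bdd (geo r) M := by
  filter_upwards [h.α.ev_r, h.β.ev_r, h.p0.ev_r, h.r0.ev_r, h.q0.ev_r, eventually_all.2 fun i => (h.p i).ev_r,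
    eventually_all.2 fun i => (h.r i).ev_r, eventually_all.2 fun i => (h.q1 i).ev_r,
    eventually_all.2 fun i => eventually_all.2 fun j => (h.q2 i j).ev_r,
    eventually_all.2 fun i => eventually_all.2 fun j => (h.s i j).ev_r] with r h1 h2 h3 h4 h5 h6 h7 h8 h9 h10
  filter_upwards [ev_M h1, ev_M h2, ev_M h3, ev_M h4, ev_M h5, eventually_all.2 fun i => ev_M (h6 i),
    eventually_all.2 fun i => ev_M (h7 i), eventually_all.2 fun i => ev_M (h8 i),
    eventually_all.2 fun i => eventually_all.2 fun j => ev_M (h9 i j),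
    eventually_all.2 fun i => eventually_all.2 fun j => ev_M (h10 i j)] with M k1 k2 k3 k4 k5 k6 k7 k8 k9 k10
  exact ⟨k1, k2, k3, k4, k5, k6, k7, k8, k9, k10⟩

lemma local_exists {c : Co (ℝ → (Fin n → ℝ) → ℝ) n} {x0 : Fin n → ℝ} (hc : c.An (0, x0))
    {v₀ : (Fin n → ℝ) → ℝ} (hv₀ : AnalyticAt ℝ v₀ x0) :
    ∃ v : ℝ → (Fin n → ℝ) → ℝ, AnalyticAt ℝ (fun w : ℝ × (Fin n → ℝ) => v w.1 w.2) (0, x0) ∧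
      (∀ᶠ x in nhds x0, v 0 x = v₀ x) ∧ ∀ᶠ w in nhds (0, x0), Sol c v {w} := by
  obtain ⟨ca, hca⟩ := hc.exists_PS
  have hv1 : AnalyticAt ℝ (tl x0 (fun _ x => v₀ x)) 0 := by
    refine tl_analytic (x0 := x0) (v := fun _ x => v₀ x) ?_
    exact AnalyticAt.comp (g := v₀) (f := Prod.snd) (x := ((0 : ℝ), x0)) hv₀ analyticAt_snd
  obtain ⟨b, hb⟩ := PS_of_analytic hv1
  have hg := hb.restr
  obtain ⟨r, hr, hbd, hg0, hg1, hg2⟩ : ∃ r : ℝ≥0, 0 < r ∧ (∀ᶠ M : ℝ≥0 in atTop, ca.Bdd (geo r) M) ∧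
      Nw (geo r) (restr b) ≠ ⊤ ∧ (∀ i, Nw (geo r) (pderiv ℝ (some i) (restr b)) ≠ ⊤) ∧
      ∀ i j, Nw (geo r) (pderiv ℝ (some i) (pderiv ℝ (some j) (restr b))) ≠ ⊤ := by
    have hpos : ∀ᶠ r : ℝ≥0 in nhdsWithin (0 : ℝ≥0) (Set.Ioi 0), 0 < r := self_mem_nhdsWithin
    exact (hpos.and (hca.bdd.and (hg.ev_r.and ((eventually_all.2 fun i => (hg.pd (some i)).ev_r).and
      (eventually_all.2 fun i => eventually_all.2 fun j => ((hg.pd (some j)).pd (some i)).ev_r))))).exists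
  obtain ⟨M, k1, k2, k3, k4⟩ := (hbd.and ((ev_M hg0).and ((eventually_all.2 fun i => ev_M (hg1 i)).and
      (eventually_all.2 fun i => eventually_all.2 fun j => ev_M (hg2 i j))))).exists
  obtain ⟨a, ha, ha0, ρ, hρ, haρ⟩ := formal_exists ca (restr b) (fun m hm => by rw [coeff_restr, if_neg hm])
    hr k1 k2 k3 k4
  have hPS := PS.of_ev hρ haρ
  set f : (Option (Fin n) → ℝ) → ℝ := fun y => ∑' m, coeff m a * mon m y
  set v : ℝ → (Fin n → ℝ) → ℝ := fun t x => f (psi x0 (t, x)) with hv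
  have htl : tl x0 v = f := by
    funext y
    show f (psi x0 (phi x0 y)) = f y
    rw [psi_phi]
  refine ⟨v, ?_, ?_, ?_⟩
  · have h1 := hPS.analytic
    rw [← psi_zero x0] at h1
    exact h1.comp (psi_analytic x0 (0, x0))
  · have hra : restr a = restr b := by
      ext m
      rw [coeff_restr]
      split_ifs with h
      · exact ha0 m h
      · rw [coeff_restr, if_neg h]
    have h1 := hPS.restr
    rw [hra] at h1
    have h2 := h1.eventuallyEq hg
    have ht : Tendsto (fun x => psi x0 (0, x)) (nhds x0) (nhds 0) :=
      (psi_tendsto x0).comp ((Continuous.prodMk_right (0 : ℝ)).tendsto x0)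
    filter_upwards [ht.eventually h2] with x hx
    have e : Function.update (psi x0 (0, x)) none 0 = psi x0 (0, x) := by
      conv_rhs => rw [← Function.update_eq_self none (psi x0 (0, x))]
      rfl
    rw [e] at hx
    refine hx.trans ?_
    show v₀ (phi x0 (psi x0 (0, x))).2 = v₀ x
    rw [phi_psi]
  · rw [ev_iff x0]
    simp only [sol_iff, htl]
    have h1 := PS_lhs hPS
    rw [ha] at h1
    exact h1.eventuallyEq (PS_rhs hca hPS)

end localtheory
end Fuchs

namespace Fuchs

section glue
variable {n : ℕ}

lemma sol_set {c : Co (ℝ → (Fin n → ℝ) → ℝ) n} {v : ℝ → (Fin n → ℝ) → ℝ} {S : Set (ℝ × (Fin n → ℝ))} :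
    Sol c v S ↔ ∀ w ∈ S, Sol c v {w} := by
  constructor
  · intro h w hw t x hx
    refine h t x ?_
    rw [show (t, x) = w from hx]; exact hw
  · intro h t x hx
    exact h _ hx t x rfl

lemma sol_congr {c : Co (ℝ → (Fin n → ℝ) → ℝ) n} {v v' : ℝ → (Fin n → ℝ) → ℝ} {w : ℝ × (Fin n → ℝ)}
    (h : ∀ᶠ z : ℝ × (Fin n → ℝ) in nhds w, v z.1 z.2 = v' z.1 z.2) (hs : Sol c v {w}) : Sol c v' {w} := by
  rw [← phi_psi 0 w] at hs ⊢
  rw [sol_iff] at hs ⊢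
  have he : tl 0 v =ᶠ[nhds (psi 0 w)] tl 0 v' := by
    have ht := (phi_analytic 0 (psi 0 w)).continuousAt.tendsto
    rw [phi_psi] at ht
    exact ht.eventually h
  have e1 : ∀ i, pd i (tl 0 v) (psi 0 w) = pd i (tl 0 v') (psi 0 w) := fun i => pd_congr i he
  have e2 : ∀ i j, pd i (pd j (tl 0 v)) (psi 0 w) = pd i (pd j (tl 0 v')) (psi 0 w) :=
    fun i j => pd_congr i (pd_congr' j he)
  simpa only [lhsFn, rhsFn, e1, e2, he.eq_of_nhds] using hs

theorem main (V : Set (Fin n → ℝ)) (hV : IsOpen V) (c : Co (ℝ → (Fin n → ℝ) → ℝ) n)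
    (hc : ∀ x ∈ V, c.An (0, x)) (v₀ : (Fin n → ℝ) → ℝ) (hv₀ : AnalyticOnNhd ℝ v₀ V) :
    ∃ Ω : Set (ℝ × (Fin n → ℝ)), IsOpen Ω ∧
      {w : ℝ × (Fin n → ℝ) | w.1 = 0 ∧ w.2 ∈ V} ⊆ Ω ∧
      ∃ v : ℝ → (Fin n → ℝ) → ℝ,
        AnalyticOnNhd ℝ (fun w : ℝ × (Fin n → ℝ) => v w.1 w.2) Ω ∧
        (∀ x ∈ V, v 0 x = v₀ x) ∧
        Sol c v Ω ∧
        ∀ (Ω' : Set (ℝ × (Fin n → ℝ))) (v' : ℝ → (Fin n → ℝ) → ℝ),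
          IsOpen Ω' → {w : ℝ × (Fin n → ℝ) | w.1 = 0 ∧ w.2 ∈ V} ⊆ Ω' →
          AnalyticOnNhd ℝ (fun w : ℝ × (Fin n → ℝ) => v' w.1 w.2) Ω' →
          (∀ x ∈ V, v' 0 x = v₀ x) →
          Sol c v' Ω' →
          ∃ Ω'' : Set (ℝ × (Fin n → ℝ)), IsOpen Ω'' ∧
            {w : ℝ × (Fin n → ℝ) | w.1 = 0 ∧ w.2 ∈ V} ⊆ Ω'' ∧
            ∀ w ∈ Ω'', v w.1 w.2 = v' w.1 w.2 := by
  classical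
  have hloc : ∀ a : V, ∃ (u : ℝ → (Fin n → ℝ) → ℝ) (ε : ℝ), 0 < ε ∧
      (∀ w ∈ Metric.ball ((0 : ℝ), a.1) ε, AnalyticAt ℝ (fun w : ℝ × (Fin n → ℝ) => u w.1 w.2) w ∧ Sol c u {w}) ∧
      ∀ x ∈ Metric.ball a.1 ε, u 0 x = v₀ x ∧ x ∈ V := by
    rintro ⟨a, ha⟩
    obtain ⟨u, h1, h2, h3⟩ := local_exists (hc a ha) (hv₀ a ha)
    obtain ⟨ε, hε, h4⟩ := Metric.eventually_nhds_iff_ball.1 (h1.eventually_analyticAt.and h3)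
    obtain ⟨ε', hε', h5⟩ := Metric.eventually_nhds_iff_ball.1 (h2.and (hV.mem_nhds ha))
    exact ⟨u, min ε ε', lt_min hε hε', fun w hw => h4 w (Metric.ball_subset_ball (min_le_left _ _) hw),
      fun x hx => h5 x (Metric.ball_subset_ball (min_le_right _ _) hx)⟩
  choose u ε hε hu hu0 using hloc
  have hcons : ∀ (a b : V) (w : ℝ × (Fin n → ℝ)), w ∈ Metric.ball ((0 : ℝ), a.1) (ε a) →
      w ∈ Metric.ball ((0 : ℝ), b.1) (ε b) → u a w.1 w.2 = u b w.1 w.2 := by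
    intro a b w hwa hwb
    have hpa : ∀ a : V, w ∈ Metric.ball ((0 : ℝ), a.1) (ε a) →
        w.2 ∈ Metric.ball a.1 (ε a) ∧ ((0 : ℝ), w.2) ∈ Metric.ball ((0 : ℝ), a.1) (ε a) := by
      intro a hw
      rw [Metric.mem_ball, Prod.dist_eq, max_lt_iff] at hw
      refine ⟨hw.2, ?_⟩
      rw [Metric.mem_ball, Prod.dist_eq, max_lt_iff]
      exact ⟨by simpa using hε a, hw.2⟩
    obtain ⟨a1, a2⟩ := hpa a hwa
    obtain ⟨b1, b2⟩ := hpa b hwb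
    have key := local_unique (hc w.2 (hu0 a _ a1).2) (hu a _ a2).1 (hu b _ b2).1 (by
        filter_upwards [Metric.isOpen_ball.mem_nhds a1, Metric.isOpen_ball.mem_nhds b1] with x hxa hxb
        rw [(hu0 a x hxa).1, (hu0 b x hxb).1])
      (by filter_upwards [Metric.isOpen_ball.mem_nhds a2] with z hz using (hu a z hz).2)
      (by filter_upwards [Metric.isOpen_ball.mem_nhds b2] with z hz using (hu b z hz).2)
    have hpre : IsPreconnected (Metric.ball ((0 : ℝ), a.1) (ε a) ∩ Metric.ball ((0 : ℝ), b.1) (ε b)) :=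
      ((convex_ball _ _).inter (convex_ball _ _)).isPreconnected
    exact AnalyticOnNhd.eqOn_of_preconnected_of_eventuallyEq
      (f := fun w : ℝ × (Fin n → ℝ) => u a w.1 w.2) (g := fun w : ℝ × (Fin n → ℝ) => u b w.1 w.2)
      (fun z hz => (hu a z hz.1).1) (fun z hz => (hu b z hz.2).1) hpre ⟨a2, b2⟩ key ⟨hwa, hwb⟩
  set v : ℝ → (Fin n → ℝ) → ℝ := fun t x =>
    if h : ∃ a : V, (t, x) ∈ Metric.ball ((0 : ℝ), a.1) (ε a) then u h.choose t x else 0 with hv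
  have hvu : ∀ (a : V) (w : ℝ × (Fin n → ℝ)), w ∈ Metric.ball ((0 : ℝ), a.1) (ε a) →
      v w.1 w.2 = u a w.1 w.2 := by
    intro a w hw
    have h : ∃ a : V, (w.1, w.2) ∈ Metric.ball ((0 : ℝ), a.1) (ε a) := ⟨a, hw⟩
    simp only [hv]
    rw [dif_pos h]
    exact hcons _ _ w h.choose_spec hw
  have hveq : ∀ (a : V) (w : ℝ × (Fin n → ℝ)), w ∈ Metric.ball ((0 : ℝ), a.1) (ε a) →
      ∀ᶠ z : ℝ × (Fin n → ℝ) in nhds w, u a z.1 z.2 = v z.1 z.2 := by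
    intro a w hw
    filter_upwards [Metric.isOpen_ball.mem_nhds hw] with z hz using (hvu a z hz).symm
  have hmem : ∀ x (hx : x ∈ V), ((0 : ℝ), x) ∈ Metric.ball ((0 : ℝ), x) (ε ⟨x, hx⟩) := fun x hx =>
    Metric.mem_ball_self (hε _)
  have hv0 : ∀ x ∈ V, v 0 x = v₀ x := by
    intro x hx
    have := hvu ⟨x, hx⟩ (0, x) (hmem x hx)
    refine this.trans ?_
    exact (hu0 ⟨x, hx⟩ x (Metric.mem_ball_self (hε _))).1
  set Ω : Set (ℝ × (Fin n → ℝ)) := ⋃ a : V, Metric.ball ((0 : ℝ), a.1) (ε a) with hΩ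
  have hΩo : IsOpen Ω := isOpen_iUnion fun a => Metric.isOpen_ball
  have hΩV : {w : ℝ × (Fin n → ℝ) | w.1 = 0 ∧ w.2 ∈ V} ⊆ Ω := by
    rintro ⟨t, x⟩ ⟨h1, h2⟩
    simp only at h1 h2
    subst h1
    exact Set.mem_iUnion.2 ⟨⟨x, h2⟩, hmem x h2⟩
  have hvan : AnalyticOnNhd ℝ (fun w : ℝ × (Fin n → ℝ) => v w.1 w.2) Ω := by
    intro w hw
    obtain ⟨a, ha⟩ := Set.mem_iUnion.1 hw
    exact (hu a w ha).1.congr (hveq a w ha)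
  have hvsol : Sol c v Ω := by
    rw [sol_set]
    intro w hw
    obtain ⟨a, ha⟩ := Set.mem_iUnion.1 hw
    exact sol_congr (hveq a w ha) (hu a w ha).2
  refine ⟨Ω, hΩo, hΩV, v, hvan, hv0, hvsol, ?_⟩
  intro Ω' v' ho hsub han h0 hs
  refine ⟨{w | ∀ᶠ z : ℝ × (Fin n → ℝ) in nhds w, v z.1 z.2 = v' z.1 z.2},
    isOpen_setOfPred_eventually_nhds, ?_, fun w hw => hw.self_of_nhds⟩
  rintro ⟨t, x⟩ ⟨h1, h2⟩
  simp only at h1 h2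
  subst h1
  have m1 : ((0 : ℝ), x) ∈ Ω := hΩV ⟨rfl, h2⟩
  have m2 : ((0 : ℝ), x) ∈ Ω' := hsub ⟨rfl, h2⟩
  refine local_unique (hc x h2) (hvan _ m1) (han _ m2) ?_ ?_ ?_
  · filter_upwards [hV.mem_nhds h2] with z hz
    rw [hv0 z hz, h0 z hz]
  · filter_upwards [hΩo.mem_nhds m1] with z hz using sol_set.1 hvsol z hz
  · filter_upwards [ho.mem_nhds m2] with z hz using sol_set.1 hs z hz

end glue
end Fuchs

/-- The Cauchy problem for the nonlinear Fuchsian equation of weight 1 with analytic data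
`v(0,x) = v₀(x)` has a unique analytic solution near `{0} × V`. -/
theorem stmt1 {n : ℕ} (V : Set (Fin n → ℝ)) (hV : IsOpen V)
    (U : Set (ℝ × (Fin n → ℝ))) (hU : IsOpen U)
    (hSU : {p : ℝ × (Fin n → ℝ) | p.1 = 0 ∧ p.2 ∈ V} ⊆ U)
    (α β p0 r0 q0 : ℝ → (Fin n → ℝ) → ℝ)
    (p r q1 : Fin n → ℝ → (Fin n → ℝ) → ℝ) (q2 s : Fin n → Fin n → ℝ → (Fin n → ℝ) → ℝ)
    (hα : AnalyticOnNhd ℝ (fun w : ℝ × (Fin n → ℝ) => α w.1 w.2) U)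
    (hβ : AnalyticOnNhd ℝ (fun w : ℝ × (Fin n → ℝ) => β w.1 w.2) U)
    (hp0 : AnalyticOnNhd ℝ (fun w : ℝ × (Fin n → ℝ) => p0 w.1 w.2) U)
    (hr0 : AnalyticOnNhd ℝ (fun w : ℝ × (Fin n → ℝ) => r0 w.1 w.2) U)
    (hq0 : AnalyticOnNhd ℝ (fun w : ℝ × (Fin n → ℝ) => q0 w.1 w.2) U)
    (hp : ∀ i, AnalyticOnNhd ℝ (fun w : ℝ × (Fin n → ℝ) => p i w.1 w.2) U)
    (hr : ∀ i, AnalyticOnNhd ℝ (fun w : ℝ × (Fin n → ℝ) => r i w.1 w.2) U)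
    (hq1 : ∀ i, AnalyticOnNhd ℝ (fun w : ℝ × (Fin n → ℝ) => q1 i w.1 w.2) U)
    (hq2 : ∀ i j, AnalyticOnNhd ℝ (fun w : ℝ × (Fin n → ℝ) => q2 i j w.1 w.2) U)
    (hs : ∀ i j, AnalyticOnNhd ℝ (fun w : ℝ × (Fin n → ℝ) => s i j w.1 w.2) U)
    (v₀ : (Fin n → ℝ) → ℝ) (hv₀ : AnalyticOnNhd ℝ v₀ V) :
    ∃ Ω : Set (ℝ × (Fin n → ℝ)), IsOpen Ω ∧
      {w : ℝ × (Fin n → ℝ) | w.1 = 0 ∧ w.2 ∈ V} ⊆ Ω ∧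
      ∃ v : ℝ → (Fin n → ℝ) → ℝ,
        AnalyticOnNhd ℝ (fun w : ℝ × (Fin n → ℝ) => v w.1 w.2) Ω ∧
        (∀ x ∈ V, v 0 x = v₀ x) ∧
        SolvesFuchs α β p0 r0 q0 p r q1 q2 s v Ω ∧
        ∀ (Ω' : Set (ℝ × (Fin n → ℝ))) (v' : ℝ → (Fin n → ℝ) → ℝ),
          IsOpen Ω' → {w : ℝ × (Fin n → ℝ) | w.1 = 0 ∧ w.2 ∈ V} ⊆ Ω' →
          AnalyticOnNhd ℝ (fun w : ℝ × (Fin n → ℝ) => v' w.1 w.2) Ω' →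
          (∀ x ∈ V, v' 0 x = v₀ x) →
          SolvesFuchs α β p0 r0 q0 p r q1 q2 s v' Ω' →
          ∃ Ω'' : Set (ℝ × (Fin n → ℝ)), IsOpen Ω'' ∧
            {w : ℝ × (Fin n → ℝ) | w.1 = 0 ∧ w.2 ∈ V} ⊆ Ω'' ∧
            ∀ w ∈ Ω'', v w.1 w.2 = v' w.1 w.2 := by
  exact Fuchs.main V hV ⟨α, β, p0, r0, q0, p, r, q1, q2, s⟩
    (fun x hx => by
      have hm : ((0 : ℝ), x) ∈ U := hSU ⟨rfl, hx⟩
      exact ⟨hα _ hm, hβ _ hm, hp0 _ hm, hr0 _ hm, hq0 _ hm, fun i => hp i _ hm, fun i => hr i _ hm,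
        fun i => hq1 i _ hm, fun i j => hq2 i j _ hm, fun i j => hs i j _ hm⟩) v₀ hv₀
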